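/- The satisfiability problem and the finite satisfiability problem for the intersection of the fluted fragment with equality and the two-variable guarded fragment are undecidable in the presence of two distinguished transitive relations; the same problems are undecidable in the presence of one distinguished transitive relation and one distinguished equivalence relation. -/

import Mathlib

/- STATEMENT 18: (Finite) satisfiability of sentences in the intersection of the
fluted fragment with equality and the two-variable guarded fragment is undecidable
with two transitive relations, and with one transitive and one equivalence
relation. -/

namespace FlutedTwoTransEq

/-- FL²-formulas with equality over countably many unary predicates (indexed by `ℕ`)
and two distinguished binary predicates (indexed by `Fin 2`); the index `m ≤ 2` records
that the free variables form a suffix of `x₁, …, x_m`, all atoms ending at the last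
variable, and only the last variable may be quantified. -/
inductive F : ℕ → Type
  | patom (p : ℕ) {m : ℕ} (h1 : 1 ≤ m) (h2 : m ≤ 2) : F m
  | batom (k : Fin 2) : F 2
  | eqatom : F 2
  | fls {m : ℕ} (h : m ≤ 2) : F m
  | not {m : ℕ} (φ : F m) : F m
  | and {m : ℕ} (φ ψ : F m) : F m
  | or {m : ℕ} (φ ψ : F m) : F m
  | imp {m : ℕ} (φ ψ : F m) : F m
  | ex {m : ℕ} (h : m ≤ 1) (φ : F (m + 1)) : F m
  | all {m : ℕ} (h : m ≤ 1) (φ : F (m + 1)) : F m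

/-- A structure interpreting the unary predicates and the two distinguished binary
predicates. -/
structure Str (A : Type) where
  U : ℕ → A → Prop
  T : Fin 2 → A → A → Prop

def Sat {A : Type} (M : Str A) : ∀ {m : ℕ}, F m → (Fin m → A) → Prop
  | m, .patom p h1 _, v => M.U p (v ⟨m - 1, by omega⟩)
  | _, .batom k, v => M.T k (v 0) (v 1)
  | _, .eqatom, v => v 0 = v 1
  | _, .fls _, _ => False
  | _, .not φ, v => ¬ Sat M φ v
  | _, .and φ ψ, v => Sat M φ v ∧ Sat M ψ v
  | _, .or φ ψ, v => Sat M φ v ∨ Sat M ψ v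
  | _, .imp φ ψ, v => Sat M φ v → Sat M ψ v
  | _, .ex _ φ, v => ∃ a : A, Sat M φ (Fin.snoc v a)
  | _, .all _ φ, v => ∀ a : A, Sat M φ (Fin.snoc v a)

/-- `φ` has a model in which both distinguished binary relations are transitive. -/
def Satisfiable (φ : F 0) : Prop :=
  ∃ (A : Type) (_ : Nonempty A) (M : Str A),
    (∀ k, Transitive (M.T k)) ∧ Sat M φ (fun i => i.elim0)

/-- `φ` has a finite model in which both distinguished binary relations are
transitive. -/
def FinitelySatisfiable (φ : F 0) : Prop :=
  ∃ (A : Type) (_ : Nonempty A) (_ : Finite A) (M : Str A),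
    (∀ k, Transitive (M.T k)) ∧ Sat M φ (fun i => i.elim0)

/-- A concrete Gödel numbering of FL²-formulas with equality. -/
def encode : ∀ {m : ℕ}, F m → ℕ
  | _, .patom p _ _ => Nat.pair 0 p
  | _, .batom k => Nat.pair 1 k.val
  | _, .eqatom => Nat.pair 2 0
  | _, .fls _ => Nat.pair 3 0
  | _, .not φ => Nat.pair 4 (encode φ)
  | _, .and φ ψ => Nat.pair 5 (Nat.pair (encode φ) (encode ψ))
  | _, .or φ ψ => Nat.pair 6 (Nat.pair (encode φ) (encode ψ))
  | _, .imp φ ψ => Nat.pair 7 (Nat.pair (encode φ) (encode ψ))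
  | _, .ex _ φ => Nat.pair 8 (encode φ)
  | _, .all _ φ => Nat.pair 9 (encode φ)

/-- The variable `x₁` occurs (free) in a formula with free variables among
`x₁, x₂`.  (Formulas of index 2 are quantifier-free.) -/
def UsesVar1 : F 2 → Prop
  | .batom _ => True
  | .eqatom => True
  | .not φ => UsesVar1 φ
  | .and φ ψ => UsesVar1 φ ∨ UsesVar1 ψ
  | .or φ ψ => UsesVar1 φ ∨ UsesVar1 ψ
  | .imp φ ψ => UsesVar1 φ ∨ UsesVar1 ψ
  | _ => False

/-- Atomic formulas with free variable `x₁`. -/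
def IsAtom1 (φ : F 1) : Prop :=
  ∃ p h1 h2, φ = F.patom p h1 h2

/-- Atomic formulas with free variables among `x₁, x₂` (including equality atoms). -/
def IsAtom2 (φ : F 2) : Prop :=
  (∃ p h1 h2, φ = F.patom p h1 h2) ∨ (∃ k, φ = F.batom k) ∨ φ = F.eqatom

/-- Atomic formulas featuring the variable `x₁`. -/
def IsBatom (φ : F 2) : Prop :=
  (∃ k, φ = F.batom k) ∨ φ = F.eqatom

/-- Membership in the guarded fragment GF²: all quantification is of the form
`∃x₂(α ∧ ψ)` or `∀x₂(α → ψ)` (resp. `∃x₁(α ∧ ψ)`, `∀x₁(α → ψ)`) where `α` is an atom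
featuring all free variables of `ψ` (in particular the quantified variable). -/
inductive Guarded : ∀ {m : ℕ}, F m → Prop
  | patom {m : ℕ} (p : ℕ) (h1 : 1 ≤ m) (h2 : m ≤ 2) : Guarded (F.patom p h1 h2)
  | batom (k : Fin 2) : Guarded (F.batom k)
  | eqatom : Guarded F.eqatom
  | fls {m : ℕ} (h : m ≤ 2) : Guarded (F.fls h)
  | not {m : ℕ} {φ : F m} : Guarded φ → Guarded (F.not φ)
  | and {m : ℕ} {φ ψ : F m} : Guarded φ → Guarded ψ → Guarded (F.and φ ψ)
  | or {m : ℕ} {φ ψ : F m} : Guarded φ → Guarded ψ → Guarded (F.or φ ψ)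
  | imp {m : ℕ} {φ ψ : F m} : Guarded φ → Guarded ψ → Guarded (F.imp φ ψ)
  | ex0 {h : 0 ≤ 1} {α χ : F 1} : IsAtom1 α → Guarded χ →
      Guarded (F.ex h (F.and α χ))
  | all0 {h : 0 ≤ 1} {α χ : F 1} : IsAtom1 α → Guarded χ →
      Guarded (F.all h (F.imp α χ))
  | ex1 {h : 1 ≤ 1} {α χ : F 2} : IsAtom2 α → Guarded χ →
      (UsesVar1 χ → IsBatom α) → Guarded (F.ex h (F.and α χ))
  | all1 {h : 1 ≤ 1} {α χ : F 2} : IsAtom2 α → Guarded χ →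
      (UsesVar1 χ → IsBatom α) → Guarded (F.all h (F.imp α χ))

/-- `φ` has a model in which `T 0` is transitive and `T 1` is an equivalence
relation. -/
def SatisfiableTransEquiv (φ : F 0) : Prop :=
  ∃ (A : Type) (_ : Nonempty A) (M : Str A),
    Transitive (M.T 0) ∧ Equivalence (M.T 1) ∧ Sat M φ (fun i => i.elim0)

/-- `φ` has a finite model in which `T 0` is transitive and `T 1` is an equivalence
relation. -/
def FinitelySatisfiableTransEquiv (φ : F 0) : Prop :=
  ∃ (A : Type) (_ : Nonempty A) (_ : Finite A) (M : Str A),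
    Transitive (M.T 0) ∧ Equivalence (M.T 1) ∧ Sat M φ (fun i => i.elim0)

/-!
The theorem follows from the computable inseparability of the guarded sentences with a finite model
of the stronger kind from those with no model of the weaker kind. By diagonalisation against
programs that output `0` or `1`, it is enough to translate a two-counter machine on an input into a
sentence that has such a finite model when the machine halts and has no model when it rejects.

The run of the machine is drawn on a grid whose coordinates are the contents of the counters. As
fluted formulas cannot express the converse of a relation, a node of the grid is a `T 1`-class of
four ports, and neighbouring nodes are joined by `T 0`-edges in both directions between their facing
ports. The ports are ranked by `1, …, 4` so that both ports on a link have the same rank and the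
four links around a face have distinct ranks. A walk around a face from the port of rank `1` to the
port of rank `4` consists of `T 0`-edges, because a turn within a node that raises the rank by one
is required to be a `T 0`-edge. By transitivity its end points are `T 0`-related, and the rule that
such ports are also `T 1`-related closes the face. Conversely, a halting run visits finitely many
nodes and hence fits on a torus, on which a cone order with the rank as height serves as `T 0`.
-/

open Function Relation

/-! ### Counter machines -/

/-- Instructions of a counter machine with registers `R` and labels `L`; `dec r l₀ l₁` jumps to
`l₀` when register `r` is zero, and otherwise decrements it and jumps to `l₁`. -/
inductive Instr (R L : Type) : Type
  | inc (r : R) (l : L)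
  | dec (r : R) (l₀ l₁ : L)
  | jump (l : L)
  | halt
  | reject

namespace Instr

variable {R L L' : Type}

/-- Relabelling of the jump targets of an instruction. -/
@[simp]
def map (f : L → L') : Instr R L → Instr R L'
  | inc r l => inc r (f l)
  | dec r l₀ l₁ => dec r (f l₀) (f l₁)
  | jump l => jump (f l)
  | halt => halt
  | reject => reject

end Instr

section Machine

variable {R L L' : Type} [DecidableEq R] {I : L → Instr R L} {I' : L' → Instr R L'}

/-- One computation step of the machine with code `I`, on configurations consisting of a label and
the register contents. -/
inductive Step (I : L → Instr R L) : L × (R → ℕ) → L × (R → ℕ) → Prop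
  | inc {l l' r s} (h : I l = .inc r l') : Step I (l, s) (l', update s r (s r + 1))
  | decZero {l l₀ l₁ r s} (h : I l = .dec r l₀ l₁) (h₀ : s r = 0) : Step I (l, s) (l₀, s)
  | decSucc {l l₀ l₁ r s k} (h : I l = .dec r l₀ l₁) (h₁ : s r = k + 1) :
      Step I (l, s) (l₁, update s r k)
  | jump {l l' s} (h : I l = .jump l') : Step I (l, s) (l', s)

/-- Reachability between configurations of the machine with code `I`. -/
abbrev Reaches (I : L → Instr R L) : L × (R → ℕ) → L × (R → ℕ) → Prop :=
  ReflTransGen (Step I)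

/-- Started in configuration `a`, the machine arrives at a halting label. -/
def HaltsFrom (I : L → Instr R L) (a : L × (R → ℕ)) : Prop :=
  ∃ b, Reaches I a b ∧ I b.1 = .halt

/-- Started in configuration `a`, the machine arrives at a rejecting label. -/
def RejectsFrom (I : L → Instr R L) (a : L × (R → ℕ)) : Prop :=
  ∃ b, Reaches I a b ∧ I b.1 = .reject

theorem Step.rightUnique (I : L → Instr R L) : Relator.RightUnique (Step I) := by
  rintro a b c (h | ⟨h, h₀⟩ | ⟨h, h₁⟩ | h) (h' | ⟨h', h₀'⟩ | ⟨h', h₁'⟩ | h') <;> simp_all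

theorem Step.ne_halt {a b : L × (R → ℕ)} (h : Step I a b) : I a.1 ≠ .halt := by
  cases h <;> simp_all

theorem Step.ne_reject {a b : L × (R → ℕ)} (h : Step I a b) : I a.1 ≠ .reject := by
  cases h <;> simp_all

theorem finite_setOf_reflTransGen {α : Type*} {r : α → α → Prop} (hr : Relator.RightUnique r)
    {a b : α} (hab : ReflTransGen r a b) (hb : ∀ c, ¬ r b c) : {c | ReflTransGen r a c}.Finite := by
  induction hab using ReflTransGen.head_induction_on with
  | refl =>
    refine (Set.finite_singleton b).subset fun c hc => ?_
    rcases hc.cases_head with h | ⟨d, h, -⟩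
    exacts [h.symm, (hb d h).elim]
  | @head a a' haa' _ ih =>
    refine (ih.insert a).subset fun c hc => ?_
    rcases hc.cases_head with h | ⟨d, h, hdc⟩
    exacts [.inl h.symm, .inr (hr haa' h ▸ hdc)]

theorem HaltsFrom.finite_reachable {a : L × (R → ℕ)} (h : HaltsFrom I a) :
    {c | Reaches I a c}.Finite :=
  let ⟨_, hab, hb⟩ := h
  finite_setOf_reflTransGen (Step.rightUnique I) hab fun _ hc => hc.ne_halt hb

theorem HaltsFrom.not_rejectsFrom {a : L × (R → ℕ)} (h : HaltsFrom I a) : ¬ RejectsFrom I a := by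
  rintro ⟨c, hac, hc⟩
  obtain ⟨b, hab, hb⟩ := h
  have eq_of_ne {d e : L × (R → ℕ)} (hde : Reaches I d e) (hd : ∀ f, ¬ Step I d f) : d = e :=
    hde.cases_head.resolve_right fun ⟨f, hdf, _⟩ => hd f hdf
  have hbc : b = c := (ReflTransGen.total_of_right_unique (Step.rightUnique I) hab hac).elim
    (eq_of_ne · fun _ h => h.ne_halt hb) fun h => (eq_of_ne h fun _ h => h.ne_reject hc).symm
  simp [← hbc, hb] at hc

theorem Step.map (f : L → L') (hf : ∀ l, I l = .halt ∨ I' (f l) = (I l).map f)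
    {a b : L × (R → ℕ)} (h : Step I a b) : Step I' (f a.1, a.2) (f b.1, b.2) := by
  have hf' := (hf a.1).resolve_left h.ne_halt
  cases h with
  | inc h => exact .inc (by simpa [h] using hf')
  | decZero h h₀ => exact .decZero (l₁ := f _) (by simpa [h] using hf') h₀
  | decSucc h h₁ => exact .decSucc (l₀ := f _) (by simpa [h] using hf') h₁
  | jump h => exact .jump (by simpa [h] using hf')

theorem Reaches.map (f : L → L') (hf : ∀ l, I l = .halt ∨ I' (f l) = (I l).map f)
    {a b : L × (R → ℕ)} (h : Reaches I a b) : Reaches I' (f a.1, a.2) (f b.1, b.2) :=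
  ReflTransGen.lift (fun c : L × (R → ℕ) => (f c.1, c.2)) (fun _ _ => Step.map f hf) _ _ h

end Machine

/-! ### Machine blocks -/

/-- A finite counter machine with a start label and a distinguished halting label, used as a
building block for larger machines. -/
structure Block (R : Type) where
  L : Type
  [finite : Finite L]
  code : L → Instr R L
  start : L
  exit : L
  code_exit : code exit = .halt

namespace Block

attribute [instance] Block.finite

section

variable {R : Type} [DecidableEq R] {L' : Type} {I' : L' → Instr R L'} {a b c : R → ℕ}
  {P Q : Block R}

/-- Started with register contents `a`, the block exits with register contents `b`. -/
def Does (P : Block R) (a b : R → ℕ) : Prop :=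
  Reaches P.code (P.start, a) (P.exit, b)

theorem Does.embed (h : P.Does a b) (f : P.L → L')
    (hf : ∀ l, l ≠ P.exit → I' (f l) = (P.code l).map f) :
    Reaches I' (f P.start, a) (f P.exit, b) := by
  refine Reaches.map f (fun l => ?_) h
  by_cases hl : l = P.exit
  exacts [.inl (hl ▸ P.code_exit), .inr (hf l hl)]

theorem Does.haltsFrom (h : P.Does a b) : HaltsFrom P.code (P.start, a) :=
  ⟨_, h, P.code_exit⟩

/-- The block that executes the instruction `i` at label `false` and exits at label `true`. -/
def single (i : Instr R Bool) : Block R where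
  L := Bool
  code l := if l then .halt else i
  start := false
  exit := true
  code_exit := rfl

theorem single_does {i : Instr R Bool} (h : Step (single i).code (false, a) (true, b)) :
    (single i).Does a b :=
  .single h

theorem single_inc_does (r : R) (a : R → ℕ) :
    (single (.inc r true)).Does a (update a r (a r + 1)) :=
  single_does (.inc rfl)

theorem single_dec_does {r : R} {k : ℕ} (h : a r = k + 1) :
    (single (.dec r true true)).Does a (update a r k) :=
  single_does (.decSucc (l₀ := true) rfl h)

theorem single_jump_does (a : R → ℕ) : (single (.jump true)).Does a a :=
  single_does (.jump rfl)

open Classical in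
/-- Sequential composition of blocks. -/
noncomputable def seq (P Q : Block R) : Block R where
  L := P.L ⊕ Q.L
  code
    | .inl l => if l = P.exit then .jump (.inr Q.start) else (P.code l).map .inl
    | .inr l => (Q.code l).map .inr
  start := .inl P.start
  exit := .inr Q.exit
  code_exit := by simp [Q.code_exit]

theorem Does.seq_start (h : P.Does a b) :
    Reaches (P.seq Q).code ((P.seq Q).start, a) (.inr Q.start, b) :=
  (h.embed Sum.inl fun l hl => by simp [seq, hl]).tail (.jump (by simp [seq]))

theorem Reaches.seq_right {l l' : Q.L} (h : Reaches Q.code (l, b) (l', c)) :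
    Reaches (P.seq Q).code (.inr l, b) (.inr l', c) :=
  h.map Sum.inr fun _ => .inr rfl

theorem Does.seq (h₁ : P.Does a b) (h₂ : Q.Does b c) : (P.seq Q).Does a c :=
  h₁.seq_start.trans (Reaches.seq_right h₂)

theorem Does.seq_rejectsFrom (h₁ : P.Does a b) (h₂ : RejectsFrom Q.code (Q.start, b)) :
    RejectsFrom (P.seq Q).code ((P.seq Q).start, a) :=
  let ⟨c, hbc, hc⟩ := h₂
  ⟨(.inr c.1, c.2), h₁.seq_start.trans (Reaches.seq_right hbc), by simp [Block.seq, hc]⟩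

open Classical in
/-- The loop that tests register `r`, exits if it is zero, and otherwise decrements it, runs `P`
and repeats; the test is at `inl false`, the exit at `inl true`. -/
noncomputable def loop (r : R) (P : Block R) : Block R where
  L := Bool ⊕ P.L
  code
    | .inl false => .dec r (.inl true) (.inr P.start)
    | .inl true => .halt
    | .inr l => if l = P.exit then .jump (.inl false) else (P.code l).map .inr
  start := .inl false
  exit := .inl true
  code_exit := rfl

theorem loop_does_zero {r : R} (h : a r = 0) : (loop r P).Does a a :=
  .single (.decZero (l₁ := .inr P.start) rfl h)

theorem Does.loop_succ {r : R} {k : ℕ} (h : a r = k + 1) (hP : P.Does (update a r k) b)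
    (hloop : (loop r P).Does b c) : (loop r P).Does a c := by
  refine .head (.decSucc (l₀ := .inl true) rfl h) (.trans ?_ hloop)
  exact (hP.embed Sum.inr fun l hl => by simp [loop, hl]).tail (.jump (by simp [loop]))

end

open Classical in
/-- The loop that moves register `0` to register `1` while testing its divisibility by `p`;
if `p` divides, it runs `Y` and repeats, otherwise it runs `N` and exits. The label `inl (i, _)`
records the residue `i` of the amount moved. -/
noncomputable def dvdLoop (p : ℕ) [NeZero p] (Y N : Block (Fin 2)) : Block (Fin 2) where
  L := ZMod p × Bool ⊕ Y.L ⊕ N.L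
  finite := have : Finite (ZMod p) := Finite.of_fintype _; inferInstance
  code
    | .inl (i, false) =>
        .dec 0 (if i = 0 then .inr (.inl Y.start) else .inr (.inr N.start)) (.inl (i, true))
    | .inl (i, true) => .inc 1 (.inl (i + 1, false))
    | .inr (.inl l) => if l = Y.exit then .jump (.inl (0, false)) else (Y.code l).map (.inr ∘ .inl)
    | .inr (.inr l) => (N.code l).map (.inr ∘ .inr)
  start := .inl (0, false)
  exit := .inr (.inr N.exit)
  code_exit := by simp [N.code_exit]

section DvdLoop

variable {p : ℕ} [NeZero p] {x : ℕ} {Y N : Block (Fin 2)} {b c : Fin 2 → ℕ}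

theorem dvdLoop_scan (i : ZMod p) (x y : ℕ) :
    Reaches (dvdLoop p Y N).code (.inl (i, false), ![x, y])
      (.inl (i + x, false), ![0, y + x]) := by
  induction x generalizing y i with
  | zero => simp [ReflTransGen.refl]
  | succ x ih =>
    have hdec : Step (dvdLoop p Y N).code (.inl (i, false), ![x + 1, y])
        (.inl (i, true), update ![x + 1, y] 0 x) := .decSucc rfl rfl
    have hinc : Step (dvdLoop p Y N).code (.inl (i, true), ![x, y])
        (.inl (i + 1, false), update ![x, y] 1 (y + 1)) := .inc rfl
    have hupd₀ : update ![x + 1, y] 0 x = ![x, y] := by ext j; fin_cases j <;> simp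
    have hupd₁ : update ![x, y] 1 (y + 1) = ![x, y + 1] := by ext j; fin_cases j <;> simp
    rw [hupd₀] at hdec
    rw [hupd₁] at hinc
    have hres : i + ((x + 1 : ℕ) : ZMod p) = i + 1 + x := by push_cast; ring
    rw [hres, show y + (x + 1) = y + 1 + x by ring]
    exact .head hdec (.head hinc (ih (i + 1) (y + 1)))

theorem dvdLoop_branch_of_dvd (Y N : Block (Fin 2)) (h : p ∣ x) :
    Reaches (dvdLoop p Y N).code ((dvdLoop p Y N).start, ![x, 0])
      (.inr (.inl Y.start), ![0, x]) := by
  have hscan := dvdLoop_scan (Y := Y) (N := N) (0 : ZMod p) x 0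
  simp only [zero_add, (ZMod.natCast_eq_zero_iff x p).2 h] at hscan
  exact hscan.tail (.decZero (r := 0) (l₁ := .inl (0, true)) (by simp [dvdLoop]) rfl)

theorem dvdLoop_branch_of_not_dvd (Y N : Block (Fin 2)) (h : ¬ p ∣ x) :
    Reaches (dvdLoop p Y N).code ((dvdLoop p Y N).start, ![x, 0])
      (.inr (.inr N.start), ![0, x]) := by
  have hscan := dvdLoop_scan (Y := Y) (N := N) (0 : ZMod p) x 0
  simp only [zero_add] at hscan
  refine hscan.tail (.decZero (r := 0) (l₁ := .inl (x, true)) ?_ rfl)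
  simp [dvdLoop, ZMod.natCast_eq_zero_iff, h]

theorem Does.dvdLoop_of_dvd (h : p ∣ x) (hY : Y.Does ![0, x] b)
    (hloop : (dvdLoop p Y N).Does b c) : (dvdLoop p Y N).Does ![x, 0] c := by
  refine ((dvdLoop_branch_of_dvd Y N h).trans ?_).trans hloop
  exact (hY.embed (Sum.inr ∘ Sum.inl) fun l hl => by simp [dvdLoop, hl]).tail
    (.jump (by simp [dvdLoop]))

theorem Does.dvdLoop_of_not_dvd (h : ¬ p ∣ x) (hN : N.Does ![0, x] b) :
    (dvdLoop p Y N).Does ![x, 0] b :=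
  (dvdLoop_branch_of_not_dvd Y N h).trans (hN.embed (Sum.inr ∘ Sum.inr) fun _ _ => rfl)

theorem dvdLoop_rejectsFrom (h : p ∣ x) (N : Block (Fin 2)) :
    RejectsFrom (dvdLoop p (single .reject) N).code
      ((dvdLoop p (single .reject) N).start, ![x, 0]) :=
  ⟨_, dvdLoop_branch_of_dvd _ N h, by simp [dvdLoop, single]⟩

end DvdLoop

end Block

/-! ### Structured register programs -/

/-- Structured programs over the registers `R`; `loop r P` tests register `r`, stops if it is zero,
and otherwise decrements it, runs `P` and repeats. -/
inductive Prog (R : Type) : Type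
  | skip
  | inc (r : R)
  | dec (r : R)
  | seq (P Q : Prog R)
  | loop (r : R) (P : Prog R)

/-- Big-step semantics of structured programs; decrementing a zero register gets stuck. -/
inductive Run {R : Type} [DecidableEq R] : Prog R → (R → ℕ) → (R → ℕ) → Prop
  | skip {s} : Run .skip s s
  | inc {r s} : Run (.inc r) s (update s r (s r + 1))
  | dec {r s k} (h : s r = k + 1) : Run (.dec r) s (update s r k)
  | seq {P Q s s' s''} (hP : Run P s s') (hQ : Run Q s' s'') : Run (.seq P Q) s s''
  | loopZero {r P s} (h : s r = 0) : Run (.loop r P) s s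
  | loopSucc {r P s k s' s''} (h : s r = k + 1) (hP : Run P (update s r k) s')
      (hloop : Run (.loop r P) s' s'') : Run (.loop r P) s s''

section Run

variable {R : Type} [DecidableEq R] {P : Prog R} {r q t : R} {s s' s'' : R → ℕ} {S : ℕ → R → ℕ}
  {n : ℕ}

theorem Run.of_eq (h : Run P s s') (e : s' = s'') : Run P s s'' :=
  e ▸ h

theorem Run.loop (h₀ : S n r = 0)
    (hS : ∀ i < n, ∃ k, S i r = k + 1 ∧ Run P (update (S i) r k) (S (i + 1))) :
    Run (.loop r P) (S 0) (S n) := by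
  suffices h : ∀ i ≤ n, Run (.loop r P) (S i) (S n) from h 0 n.zero_le
  intro i hi
  induction hi using Nat.decreasingInduction with
  | self => exact .loopZero h₀
  | of_succ i hi ih =>
    obtain ⟨k, hk, hP⟩ := hS i hi
    exact .loopSucc hk hP ih

namespace Prog

/-- `P` repeated a fixed number of times. -/
def rep (P : Prog R) : ℕ → Prog R
  | 0 => skip
  | n + 1 => seq (rep P n) P

/-- Set register `r` to zero. -/
def clear (r : R) : Prog R := loop r skip

/-- Add register `r` to register `q`, setting `r` to zero. -/
def transfer (r q : R) : Prog R := loop r (inc q)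

/-- Add register `r` to the registers `q` and `t`, setting `r` to zero. -/
def transfer₂ (r q t : R) : Prog R := loop r (seq (inc q) (inc t))

/-- Add register `r` to register `q`, using register `t` as temporary storage. -/
def copy (r q t : R) : Prog R := seq (transfer₂ r q t) (transfer t r)

end Prog

open Prog

theorem Run.rep (hS : ∀ i < n, Run P (S i) (S (i + 1))) : Run (P.rep n) (S 0) (S n) := by
  induction n with
  | zero => exact .skip
  | succ n ih => exact .seq (ih fun i hi => hS i (by omega)) (hS n (by omega))

theorem run_clear (r : R) (s : R → ℕ) : Run (clear r) s (update s r 0) := by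
  have h := Run.loop (P := skip) (S := fun i => update s r (s r - i)) (n := s r) (r := r) (by simp)
    fun i hi => ⟨s r - (i + 1), by simp; omega, by simpa using .skip⟩
  simpa [clear] using h

theorem run_transfer (h : r ≠ q) (s : R → ℕ) :
    Run (transfer r q) s (update (update s r 0) q (s q + s r)) := by
  have hloop := Run.loop (P := inc q) (n := s r) (r := r)
    (S := fun i => update (update s r (s r - i)) q (s q + i)) (by simp [h])
    fun i hi => ⟨s r - (i + 1), by simp [h]; omega, Run.inc.of_eq (by
      ext x; simp only [update_apply]; grind)⟩
  simpa [transfer] using hloop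

theorem run_transfer₂ (hrq : r ≠ q) (hrt : r ≠ t) (hqt : q ≠ t) (s : R → ℕ) :
    Run (transfer₂ r q t) s (update (update (update s r 0) q (s q + s r)) t (s t + s r)) := by
  have hloop := Run.loop (P := .seq (inc q) (inc t)) (n := s r) (r := r)
    (S := fun i => update (update (update s r (s r - i)) q (s q + i)) t (s t + i))
    (by simp [hrq, hrt])
    fun i hi => ⟨s r - (i + 1), by simp [hrq, hrt]; omega, (Run.seq .inc .inc).of_eq (by
      ext x; simp only [update_apply]; grind)⟩
  simpa [transfer₂, hqt] using hloop

theorem run_copy (hrq : r ≠ q) (hrt : r ≠ t) (hqt : q ≠ t) (h : s t = 0) :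
    Run (copy r q t) s (update s q (s q + s r)) :=
  ((run_transfer₂ hrq hrt hqt s).seq (run_transfer hrt.symm _)).of_eq (by
    ext x; simp only [update_apply]; grind)

/-- Translation of structured programs to machine blocks. -/
noncomputable def Prog.toBlock : Prog R → Block R
  | skip => .single (.jump true)
  | inc r => .single (.inc r true)
  | dec r => .single (.dec r true true)
  | seq P Q => .seq P.toBlock Q.toBlock
  | loop r P => .loop r P.toBlock

theorem Run.toBlock_does (h : Run P s s') : P.toBlock.Does s s' := by
  induction h with
  | skip => exact Block.single_jump_does _
  | inc => exact Block.single_inc_does _ _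
  | dec h => exact Block.single_dec_does h
  | seq _ _ ihP ihQ => exact ihP.seq ihQ
  | loopZero h => exact Block.loop_does_zero h
  | loopSucc h _ _ ihP ihLoop => exact ihP.loop_succ h ihLoop

end Run

namespace Prog

/-- Multiply register `0` by `p`, using register `1` as temporary storage. -/
def mul (p : ℕ) : Prog (Fin 2) :=
  seq (loop 0 (rep (inc 1) p)) (transfer 1 0)

/-- Divide register `1` by `p`, leaving the quotient in register `0`; each round removes
`p - 1` units in its body and one unit in the loop test. -/
def div (p : ℕ) : Prog (Fin 2) :=
  loop 1 (seq (rep (dec 1) (p - 1)) (inc 0))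

end Prog

open Prog

theorem update_vec₂_zero (x y k : ℕ) : update ![x, y] 0 k = ![k, y] := by
  ext i; fin_cases i <;> simp

theorem update_vec₂_one (x y k : ℕ) : update ![x, y] 1 k = ![x, k] := by
  ext i; fin_cases i <;> simp

theorem run_transfer_zero_one (x : ℕ) : Run (transfer 0 1) ![x, 0] ![0, x] := by
  simpa [update_vec₂_zero, update_vec₂_one] using run_transfer (zero_ne_one (α := Fin 2)) ![x, 0]

theorem run_transfer_one_zero (x : ℕ) : Run (transfer 1 0) ![0, x] ![x, 0] := by
  simpa [update_vec₂_zero, update_vec₂_one] using run_transfer (one_ne_zero (α := Fin 2)) ![0, x]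

theorem run_mul (p x : ℕ) : Run (mul p) ![x, 0] ![p * x, 0] := by
  refine .seq (s' := ![0, p * x]) ?_ (run_transfer_one_zero _)
  have hloop : Run (.loop 0 (.rep (.inc 1) p)) ![x - 0, p * 0] ![x - x, p * x] := by
    refine Run.loop (S := fun i => ![x - i, p * i]) (by simp) fun i hi =>
      ⟨x - (i + 1), by simp; omega, ?_⟩
    rw [update_vec₂_zero]
    refine Run.rep (S := fun j => ![x - (i + 1), p * i + j]) fun j _ => Run.inc.of_eq ?_
    simp [update_vec₂_one, add_assoc]
  simpa using hloop

theorem run_div {p : ℕ} (hp : 0 < p) (y : ℕ) : Run (div p) ![0, p * y] ![y, 0] := by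
  have hloop : Run (div p) ![0, p * (y - 0)] ![y, p * (y - y)] := by
    refine Run.loop (S := fun i => ![i, p * (y - i)]) (by simp) fun i hi => ?_
    obtain ⟨z, hz⟩ : ∃ z, y - i = z + 1 := ⟨y - i - 1, by omega⟩
    have hpz : p * (z + 1) = p * z + (p - 1) + 1 := by rw [mul_add_one]; omega
    simp only [hz, show y - (i + 1) = z by omega]
    refine ⟨p * z + (p - 1), hpz, .seq (s' := ![i, p * z]) ?_ (Run.inc.of_eq ?_)⟩
    · have hrep : Run (rep (dec 1) (p - 1)) ![i, p * z + (p - 1 - 0)]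
          ![i, p * z + (p - 1 - (p - 1))] :=
        Run.rep (S := fun j => ![i, p * z + (p - 1 - j)]) fun j hj =>
          (Run.dec (k := p * z + (p - 1 - (j + 1))) (by simp; omega)).of_eq (update_vec₂_one ..)
      simpa [update_vec₂_one] using hrep
    · exact update_vec₂_zero ..
  simpa using hloop

/-! ### Gödel encoding of registers by two counters -/

/-- The register contents `s`, restricted to the registers in `K`, as a single number: the product
of the prime powers `p_r ^ s r`. -/
noncomputable def godel (K : Finset ℕ) (s : ℕ → ℕ) : ℕ :=
  ∏ r ∈ K, Nat.nth Nat.Prime r ^ s r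

theorem godel_update_add_one {K : Finset ℕ} {r : ℕ} (hr : r ∈ K) (s : ℕ → ℕ) (k : ℕ) :
    godel K (update s r (k + 1)) = Nat.nth Nat.Prime r * godel K (update s r k) := by
  have herase (j : ℕ) : godel K (update s r j) = Nat.nth Nat.Prime r ^ j * godel (K.erase r) s := by
    rw [godel, ← Finset.mul_prod_erase _ _ hr, update_self]
    congr 1
    exact Finset.prod_congr rfl fun x hx => by rw [update_of_ne (Finset.ne_of_mem_erase hx)]
  rw [herase, herase, pow_succ', mul_assoc]

theorem godel_eq_nth_prime_mul {K : Finset ℕ} {r k : ℕ} {s : ℕ → ℕ} (hr : r ∈ K)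
    (h : s r = k + 1) : godel K s = Nat.nth Nat.Prime r * godel K (update s r k) := by
  rw [← godel_update_add_one hr, ← h, update_eq_self]

theorem godel_single {K : Finset ℕ} {r : ℕ} (hr : r ∈ K) (n : ℕ) :
    godel K (Pi.single r n) = Nat.nth Nat.Prime r ^ n := by
  rw [godel, Finset.prod_eq_single_of_mem r hr fun i _ hi => by simp [hi], Pi.single_eq_same]

theorem not_nth_prime_dvd_godel {K : Finset ℕ} {r : ℕ} {s : ℕ → ℕ} (h : s r = 0) :
    ¬ Nat.nth Nat.Prime r ∣ godel K s := by
  have hr := Nat.prime_nth_prime r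
  rw [godel, hr.prime.dvd_finsetProd_iff]
  rintro ⟨i, -, hi⟩
  have hri : Nat.nth Nat.Prime r = Nat.nth Nat.Prime i :=
    (Nat.prime_dvd_prime_iff_eq hr (Nat.prime_nth_prime i)).1 (hr.dvd_of_dvd_pow hi)
  obtain rfl := Nat.nth_injective Nat.infinite_setOfPred_prime hri
  exact hr.one_lt.ne' (by simpa [h] using hi)

instance nth_prime_neZero (r : ℕ) : NeZero (Nat.nth Nat.Prime r) :=
  ⟨(Nat.prime_nth_prime r).ne_zero⟩

/-- The registers occurring in a program. -/
def Prog.regs : Prog ℕ → Finset ℕ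
  | skip => ∅
  | inc r => {r}
  | dec r => {r}
  | seq P Q => P.regs ∪ Q.regs
  | loop r P => insert r P.regs

/-- Translation of register programs to two-counter blocks working on Gödel encodings held in
counter `0`. -/
noncomputable def Prog.compile : Prog ℕ → Block (Fin 2)
  | skip => .single (.jump true)
  | inc r => (mul (Nat.nth Nat.Prime r)).toBlock
  | dec r => (seq (transfer 0 1) (div (Nat.nth Nat.Prime r))).toBlock
  | seq P Q => .seq P.compile Q.compile
  | loop r P => .dvdLoop (Nat.nth Nat.Prime r) (.seq (div (Nat.nth Nat.Prime r)).toBlock P.compile)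
      (transfer 1 0).toBlock

theorem Run.compile_does {P : Prog ℕ} {s s' : ℕ → ℕ} (h : Run P s s') {K : Finset ℕ}
    (hK : P.regs ⊆ K) : P.compile.Does ![godel K s, 0] ![godel K s', 0] := by
  induction h with
  | skip => exact Block.single_jump_does _
  | @inc r s =>
    rw [godel_update_add_one (hK (by simp [regs])), update_eq_self]
    exact (run_mul _ _).toBlock_does
  | @dec r s k h =>
    rw [godel_eq_nth_prime_mul (hK (by simp [regs])) h]
    exact (Run.seq (run_transfer_zero_one _)
      (run_div (Nat.prime_nth_prime r).pos _)).toBlock_does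
  | seq _ _ ihP ihQ =>
    exact (ihP (Finset.union_subset_left hK)).seq (ihQ (Finset.union_subset_right hK))
  | loopZero h =>
    exact .dvdLoop_of_not_dvd (not_nth_prime_dvd_godel h) (run_transfer_one_zero _).toBlock_does
  | @loopSucc r P s k s' s'' h _ _ ihP ihLoop =>
    obtain ⟨hr, hP⟩ := Finset.insert_subset_iff.1 hK
    have hs := godel_eq_nth_prime_mul hr h
    refine .dvdLoop_of_dvd ⟨_, hs⟩ ?_ (ihLoop hK)
    rw [hs]
    exact (run_div (Nat.prime_nth_prime r).pos _).toBlock_does.seq (ihP hP)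

/-- The two-counter block that runs `P` and then rejects if register `1` is nonzero. -/
noncomputable def Prog.decider (P : Prog ℕ) : Block (Fin 2) :=
  .seq P.compile (.dvdLoop (Nat.nth Nat.Prime 1) (.single .reject) (.single (.jump true)))

section Decider

variable {P : Prog ℕ} {n : ℕ} {s : ℕ → ℕ}

theorem Run.compile_does_two_pow (h : Run P (Pi.single 0 n) s) :
    P.compile.Does ![2 ^ n, 0] ![godel ({0, 1} ∪ P.regs) s, 0] := by
  have hdoes := h.compile_does (K := {0, 1} ∪ P.regs) Finset.subset_union_right
  rwa [godel_single (by simp), Nat.nth_prime_zero_eq_two] at hdoes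

theorem Run.haltsFrom_decider (h : Run P (Pi.single 0 n) s) (hs : s 1 = 0) :
    HaltsFrom P.decider.code (P.decider.start, ![2 ^ n, 0]) :=
  (h.compile_does_two_pow.seq (.dvdLoop_of_not_dvd (not_nth_prime_dvd_godel hs)
    (Block.single_jump_does _))).haltsFrom

theorem Run.rejectsFrom_decider (h : Run P (Pi.single 0 n) s) (hs : s 1 = 1) :
    RejectsFrom P.decider.code (P.decider.start, ![2 ^ n, 0]) :=
  h.compile_does_two_pow.seq_rejectsFrom (Block.dvdLoop_rejectsFrom
    ⟨_, godel_eq_nth_prime_mul (by simp) hs⟩ _)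

end Decider

/-! ### Register programs for partial recursive functions -/

/-- For every choice of input registers `ins` and output register `out` below `m`, some program adds
the value of `f` to the output register, provided that the registers from `m` on, which serve as
working memory, are initially zero. -/
def RegisterComputable {n : ℕ} (f : List.Vector ℕ n →. ℕ) : Prop :=
  ∀ (ins : Fin n → ℕ) (out m : ℕ), (∀ i, ins i < m) → out < m → (∀ i, ins i ≠ out) →
    ∃ P, ∀ s : ℕ → ℕ, (∀ r, m ≤ r → s r = 0) → ∀ v ∈ f (.ofFn (s ∘ ins)),
      Run P s (update s out (s out + v))

theorem ofFn_comp_vecCons {n : ℕ} (s : ℕ → ℕ) (r : ℕ) (ins : Fin n → ℕ) :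
    List.Vector.ofFn (s ∘ Matrix.vecCons r ins) = s r ::ᵥ List.Vector.ofFn (s ∘ ins) :=
  rfl

theorem mem_of_mem_mOfFn {n : ℕ} {α : Type} {f : Fin n → Part α} {v : List.Vector α n}
    (h : v ∈ (List.Vector.mOfFn f : Part (List.Vector α n))) (i : Fin n) : v.get i ∈ f i := by
  induction n with
  | zero => exact i.elim0
  | succ n ih =>
    simp only [List.Vector.mOfFn, Part.bind_eq_bind, Part.mem_bind_iff, Part.pure_eq_some,
      Part.mem_some_iff] at h
    obtain ⟨a, ha, w, hw, rfl⟩ := h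
    cases i using Fin.cases with
    | zero => simpa using ha
    | succ j => simpa using ih hw j

/-- Set the registers from `m` to `m + k - 1` to zero. -/
def Prog.clearRange (m : ℕ) : ℕ → Prog ℕ
  | 0 => skip
  | k + 1 => seq (clearRange m k) (clear (m + k))

theorem run_clearRange (m k : ℕ) (s : ℕ → ℕ) :
    Run (clearRange m k) s fun r => if m ≤ r ∧ r < m + k then 0 else s r := by
  induction k with
  | zero => exact Run.skip.of_eq (by ext r; grind)
  | succ k ih => exact (ih.seq (run_clear ..)).of_eq (by ext r; simp only [update_apply]; grind)

namespace RegisterComputable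

variable {k n m out : ℕ} {ins : Fin n → ℕ}

theorem exists_run {f : List.Vector ℕ n → ℕ} (hf : RegisterComputable fun v => Part.some (f v))
    (hins : ∀ i, ins i < m) (hout : out < m) (hne : ∀ i, ins i ≠ out) :
    ∃ P, ∀ s : ℕ → ℕ, (∀ r, m ≤ r → s r = 0) →
      Run P s (update s out (s out + f (.ofFn (s ∘ ins)))) :=
  let ⟨P, hP⟩ := hf ins out m hins hout hne
  ⟨P, fun s hs => hP s hs _ (Part.mem_some _)⟩

theorem const_zero : RegisterComputable (n := 0) fun _ => Part.some 0 :=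
  fun _ _ _ _ _ _ => ⟨.skip, fun _ _ _ hv => Run.skip.of_eq (by simp [Part.mem_some_iff.1 hv])⟩

theorem get (i : Fin n) : RegisterComputable fun v => Part.some (v.get i) := by
  intro ins out m hins hout hne
  refine ⟨copy (ins i) out m, fun s hs v hv => ?_⟩
  obtain rfl : v = s (ins i) := by simpa using hv
  exact run_copy (hne i) (hins i).ne hout.ne (hs m le_rfl)

theorem succ : RegisterComputable (n := 1) fun v => Part.some v.head.succ := by
  intro ins out m hins hout hne
  refine ⟨.seq (copy (ins 0) out m) (.inc out), fun s hs v hv => ?_⟩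
  obtain rfl : v = s (ins 0) + 1 := Part.mem_some_iff.1 hv
  refine ((run_copy (hne 0) (hins 0).ne hout.ne (hs m le_rfl)).seq .inc).of_eq ?_
  simp [add_assoc]

theorem exists_run_family {g : Fin n → List.Vector ℕ k →. ℕ} (hg : ∀ i, RegisterComputable (g i))
    {ins : Fin k → ℕ} (hins : ∀ i, ins i < m) {j : ℕ} (hj : j ≤ n) :
    ∃ P, ∀ s : ℕ → ℕ, (∀ r, m ≤ r → s r = 0) → ∀ w : ℕ → ℕ,
      (∀ i : Fin n, w i ∈ g i (.ofFn (s ∘ ins))) →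
      Run P s fun r => if m ≤ r ∧ r < m + j then w (r - m) else s r := by
  induction j with
  | zero => exact ⟨.skip, fun s _ w _ => Run.skip.of_eq (by ext r; grind)⟩
  | succ j ih =>
    obtain ⟨P, hP⟩ := ih (by omega)
    obtain ⟨Q, hQ⟩ := hg ⟨j, hj⟩ ins (m + j) (m + n) (fun i => by grind) (by omega)
      (fun i => by grind)
    refine ⟨.seq P Q, fun s hs w hw => ?_⟩
    have hin : (fun r => if m ≤ r ∧ r < m + j then w (r - m) else s r) ∘ ins = s ∘ ins := by
      ext i; have := hins i; simp; omega
    refine ((hP s hs w hw).seq (hQ _ (fun r hr => ?_) (w j) ?_)).of_eq ?_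
    · have := hs r (by omega); grind
    · rw [hin]; exact hw ⟨j, hj⟩
    · have := hs (m + j) (by omega)
      ext r; simp only [update_apply]; grind

theorem comp {f : List.Vector ℕ n →. ℕ} {g : Fin n → List.Vector ℕ k →. ℕ}
    (hf : RegisterComputable f) (hg : ∀ i, RegisterComputable (g i)) :
    RegisterComputable fun v => (List.Vector.mOfFn fun i => g i v) >>= f := by
  intro ins out m hins hout _
  obtain ⟨P, hP⟩ := exists_run_family hg hins le_rfl
  obtain ⟨Q, hQ⟩ := hf (fun i => m + i) out (m + n) (fun i => by omega) (by omega)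
    (fun i => by omega)
  refine ⟨.seq P (.seq Q (clearRange m n)), fun s hs v hv => ?_⟩
  obtain ⟨w, hw, hv⟩ := Part.mem_bind_iff.1 hv
  let W (i : ℕ) : ℕ := if h : i < n then w.get ⟨i, h⟩ else 0
  have hin : List.Vector.ofFn ((fun r => if m ≤ r ∧ r < m + n then W (r - m) else s r) ∘
      fun i : Fin n => m + (i : ℕ)) = w := by
    ext i; simp [W]
  refine ((hP s hs W fun i => by simpa [W] using mem_of_mem_mOfFn hw i).seq
    ((hQ _ (fun r hr => ?_) v (by rwa [hin])).seq (run_clearRange m n _))).of_eq ?_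
  · have := hs r (by omega); grind
  · ext r
    have := hs r
    simp only [update_apply]; grind

theorem exists_run_prec_body {g : List.Vector ℕ (n + 2) → ℕ}
    (hg : RegisterComputable fun v => Part.some (g v)) (hins : ∀ i, ins i < m) :
    ∃ P, ∀ s : ℕ → ℕ, (∀ r, m + 3 ≤ r → s r = 0) →
      Run P s (update (update s (m + 2) (g (s (m + 1) ::ᵥ s (m + 2) ::ᵥ .ofFn (s ∘ ins))))
        (m + 1) (s (m + 1) + 1)) := by
  obtain ⟨P, hP⟩ := hg.exists_run (ins := Matrix.vecCons (m + 1) (Matrix.vecCons (m + 2) ins))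
    (out := m + 3) (m := m + 4) (by simp [Fin.forall_fin_succ]; grind) (by omega)
    (by simp [Fin.forall_fin_succ]; grind)
  refine ⟨.seq P (.seq (clear (m + 2)) (.seq (transfer (m + 3) (m + 2)) (.inc (m + 1)))),
    fun s hs => ?_⟩
  have hrun := hP s fun r hr => hs r (by omega)
  simp only [ofFn_comp_vecCons] at hrun
  refine (hrun.seq ((run_clear ..).seq ((run_transfer (by omega) _).seq .inc))).of_eq ?_
  have := hs (m + 3) le_rfl
  ext r; simp only [update_apply]; grind

theorem exists_run_prec_loop {f : List.Vector ℕ n → ℕ} {g : List.Vector ℕ (n + 2) → ℕ}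
    (hf : RegisterComputable fun v => Part.some (f v))
    (hg : RegisterComputable fun v => Part.some (g v)) (hins : ∀ i, ins i < m) :
    ∃ P, ∀ s : ℕ → ℕ, (∀ r, m < r → s r = 0) →
      Run P s (update (update (update s m 0) (m + 1) (s m)) (m + 2)
        ((s m).rec (f (.ofFn (s ∘ ins))) fun y IH => g (y ::ᵥ IH ::ᵥ .ofFn (s ∘ ins)))) := by
  obtain ⟨P, hP⟩ := hf.exists_run (ins := ins) (out := m + 2) (m := m + 3) (fun i => by grind)
    (by omega) (fun i => by grind)
  obtain ⟨Q, hQ⟩ := exists_run_prec_body hg hins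
  refine ⟨.seq P (.loop m Q), fun s hs => ?_⟩
  set t := List.Vector.ofFn (s ∘ ins)
  let R (i : ℕ) : ℕ := i.rec (f t) fun y IH => g (y ::ᵥ IH ::ᵥ t)
  let S (i : ℕ) : ℕ → ℕ := update (update (update s m (s m - i)) (m + 1) i) (m + 2) (R i)
  have hstart : Run P s (S 0) := (hP s fun r hr => hs r (by omega)).of_eq <| by
    have := hs (m + 1) (by omega)
    have := hs (m + 2) (by omega)
    have : R 0 = f t := rfl
    ext r; simp only [S, update_apply]; grind
  have hloop : Run (.loop m Q) (S 0) (S (s m)) := by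
    refine Run.loop (by simp [S]) fun i hi => ⟨s m - (i + 1), by simp [S]; omega, ?_⟩
    have hrun := hQ (update (S i) m (s m - (i + 1))) fun r hr => by
      have := hs r (by omega)
      simp only [S, update_apply]; grind
    have hin : update (S i) m (s m - (i + 1)) ∘ ins = s ∘ ins := by
      ext j; have := hins j; simp only [S, comp_apply, update_apply]; grind
    rw [hin] at hrun
    refine hrun.of_eq ?_
    have : R (i + 1) = g (i ::ᵥ R i ::ᵥ t) := rfl
    ext r; simp only [S, update_apply]; grind
  exact (hstart.seq hloop).of_eq (by simp [S, R])

theorem prec {f : List.Vector ℕ n → ℕ} {g : List.Vector ℕ (n + 2) → ℕ}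
    (hf : RegisterComputable fun v => Part.some (f v))
    (hg : RegisterComputable fun v => Part.some (g v)) :
    RegisterComputable fun v : List.Vector ℕ (n + 1) => Part.some
      (v.head.rec (f v.tail) fun y IH => g (y ::ᵥ IH ::ᵥ v.tail) : ℕ) := by
  intro ins out m hins hout _
  have hins' : ∀ i : Fin n, ins i.succ < m := fun i => hins i.succ
  obtain ⟨P, hP⟩ := exists_run_prec_loop hf hg hins'
  refine ⟨.seq (copy (ins 0) m (m + 1)) (.seq P (.seq (transfer (m + 2) out) (clear (m + 1)))),
    fun s hs v hv => ?_⟩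
  have hm := hs m le_rfl
  have hm₁ := hs (m + 1) (by omega)
  have hins₀ := hins 0
  have hcopy : Run (copy (ins 0) m (m + 1)) s (update s m (s (ins 0))) :=
    (run_copy (by omega) (by omega) (by omega) hm₁).of_eq (by rw [hm, zero_add])
  have hrun := hP (update s m (s (ins 0))) fun r hr => by
    rw [update_of_ne hr.ne']; exact hs r hr.le
  rw [update_comp_eq_of_forall_ne _ _ fun i => (hins' i).ne, update_self] at hrun
  have hv' : v = (s (ins 0)).rec (f (.ofFn (s ∘ fun i => ins i.succ))) fun y IH =>
      g (y ::ᵥ IH ::ᵥ .ofFn (s ∘ fun i => ins i.succ)) := Part.mem_some_iff.1 hv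
  rw [← hv'] at hrun
  refine (hcopy.seq (hrun.seq ((run_transfer (by omega) _).seq (run_clear ..)))).of_eq ?_
  ext r; simp only [update_apply]; grind

theorem rfind {f : List.Vector ℕ (n + 1) → ℕ} (hf : RegisterComputable fun v => Part.some (f v)) :
    RegisterComputable fun v : List.Vector ℕ n =>
      Nat.rfind fun k => Part.some (decide (f (k ::ᵥ v) = 0)) := by
  intro ins out m hins hout _
  obtain ⟨P, hP⟩ := hf.exists_run (ins := Matrix.vecCons m ins) (out := m + 1) (m := m + 2)
    (by simp [Fin.forall_fin_succ]; grind) (by omega) (by simp [Fin.forall_fin_succ]; grind)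
  refine ⟨.seq P (.seq (.loop (m + 1) (.seq (clear (m + 1)) (.seq (.inc m) P))) (transfer m out)),
    fun s hs v hv => ?_⟩
  set t := List.Vector.ofFn (s ∘ ins)
  obtain ⟨hv₀, hmin⟩ := Nat.mem_rfind.1 hv
  let S (i : ℕ) : ℕ → ℕ := update (update s m i) (m + 1) (f (i ::ᵥ t))
  have hP' (i : ℕ) : Run P (update s m i) (S i) := by
    have hrun := hP (update s m i) fun r hr => by
      rw [update_of_ne (by omega)]; exact hs r (by omega)
    rw [ofFn_comp_vecCons, update_comp_eq_of_forall_ne _ _ fun i => (hins i).ne, update_self]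
      at hrun
    refine hrun.of_eq ?_
    rw [update_of_ne (by omega), hs (m + 1) (by omega), zero_add]
  have hloop : Run (.loop (m + 1) (.seq (clear (m + 1)) (.seq (.inc m) P))) (S 0) (S v) := by
    refine Run.loop (by simpa [S] using hv₀) fun i hi => ?_
    obtain ⟨k, hk⟩ := Nat.exists_eq_succ_of_ne_zero (show f (i ::ᵥ t) ≠ 0 by simpa using hmin hi)
    refine ⟨k, by simp [S, hk], (run_clear ..).seq (Run.seq .inc ?_)⟩
    convert hP' (i + 1) using 1
    have := hs (m + 1) (by omega)
    ext r; simp only [S, update_apply]; grind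
  have hzero : update s m 0 = s := update_eq_self_iff.2 (hs m le_rfl).symm
  have hstart : Run P s (S 0) := by simpa only [hzero] using hP' 0
  refine (hstart.seq (hloop.seq (run_transfer (by omega) _))).of_eq ?_
  have := hs m le_rfl
  have := hs (m + 1) (by omega)
  have : f (v ::ᵥ t) = 0 := by simpa using hv₀
  ext r; simp only [S, update_apply]; grind

theorem of_primrec' {f : List.Vector ℕ n → ℕ} (h : Nat.Primrec' f) :
    RegisterComputable fun v => Part.some (f v) := by
  induction h with
  | zero => exact const_zero
  | succ => exact succ
  | get i => exact get i
  | @comp m n f g _ _ ihf ihg =>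
    have heq (v) : (List.Vector.mOfFn fun i => Part.some (g i v)) >>= (fun v => Part.some (f v)) =
        Part.some (f (List.Vector.ofFn fun i => g i v)) := by
      rw [Vector.mOfFn_part_some]
      exact Part.bind_some ..
    simpa only [heq] using comp ihf ihg
  | prec _ _ ihf ihg => exact prec ihf ihg

theorem of_partrec' {f : List.Vector ℕ n →. ℕ} (h : Nat.Partrec' f) : RegisterComputable f := by
  induction h with
  | prim h => exact of_primrec' h
  | comp g _ _ ihf ihg => exact comp ihf ihg
  | rfind _ ih => exact rfind ih

end RegisterComputable

theorem exists_prog_of_partrec {u : ℕ →. ℕ} (hu : Partrec u) :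
    ∃ P : Prog ℕ, ∀ n, ∀ v ∈ u n, ∃ s, Run P (Pi.single 0 n) s ∧ s 1 = v := by
  obtain ⟨P, hP⟩ := RegisterComputable.of_partrec' (Nat.Partrec'.part_iff₁.2 hu) (fun _ => 0) 1 2
    (by simp) (by simp) (by simp)
  refine ⟨P, fun n v hv => ⟨_, hP (Pi.single 0 n) (fun r hr => ?_) v ?_, by simp⟩⟩
  · exact Pi.single_eq_of_ne (by omega) _
  · simpa using hv

theorem exists_block_of_partrec {u : ℕ →. ℕ} (hu : Partrec u) :
    ∃ B : Block (Fin 2), ∀ n,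
      (0 ∈ u n → HaltsFrom B.code (B.start, ![2 ^ n, 0])) ∧
      (1 ∈ u n → RejectsFrom B.code (B.start, ![2 ^ n, 0])) := by
  obtain ⟨P, hP⟩ := exists_prog_of_partrec hu
  exact ⟨P.decider, fun n =>
    ⟨fun h => let ⟨_, hrun, hs⟩ := hP n 0 h; hrun.haltsFrom_decider hs,
      fun h => let ⟨_, hrun, hs⟩ := hP n 1 h; hrun.rejectsFrom_decider hs⟩⟩

/-! ### Rules -/

section Rule

/-- Conclusions of Horn rules about two elements `x`, `y`, over unary predicate symbols `P`. -/
inductive Conclusion (P : Type) : Type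
  | eq
  | rel (k : Fin 2)
  | pred (p : P)
  | false

/-- Guarded rules over unary predicate symbols `P` and two binary predicates: `succ p k q` demands
for each `x` in `p` a `T k`-successor in `q`; `horn p ps k q c` says that `c` holds of all `x` in
`p` and in every member of `ps` and all `T k`-successors `y` of `x` in `q`; and `seed p ps` demands
an element of `p` that is in every member of `ps`. -/
inductive Rule (P : Type) : Type
  | succ (p : P) (k : Fin 2) (q : P)
  | horn (p : P) (ps : List P) (k : Fin 2) (q : P) (c : Conclusion P)
  | seed (p : P) (ps : List P)

variable {P A : Type} (U : P → A → Prop) (T : Fin 2 → A → A → Prop)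

/-- Truth of a conclusion about `x` and `y`. -/
def Conclusion.Holds (x y : A) : Conclusion P → Prop
  | eq => x = y
  | rel k => T k x y
  | pred p => U p y
  | false => False

/-- Truth of a rule. -/
def Rule.Holds : Rule P → Prop
  | succ p k q => ∀ x, U p x → ∃ y, T k x y ∧ U q y
  | horn p ps k q c =>
      ∀ x, U p x → (∀ p' ∈ ps, U p' x) → ∀ y, T k x y → U q y → c.Holds U T x y
  | seed p ps => ∃ x, U p x ∧ ∀ p' ∈ ps, U p' x

end Rule

/-! ### Grid rules -/

section GridRules

/-- A port of a grid node: an axis and a direction along it, `true` being the positive one. -/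
abbrev Port : Type := Fin 2 × Bool

/-- The coordinates of a grid node modulo `4`. -/
abbrev Colour : Type := Fin 2 → ZMod 4

namespace Port

/-- The port facing `d` across a link. -/
def opp (d : Port) : Port := (d.1, !d.2)

/-- The unit vector that points out of a port. -/
def vec (R : Type) [Ring R] (d : Port) : Fin 2 → R := Pi.single d.1 (if d.2 then 1 else -1)

theorem opp_opp (d : Port) : d.opp.opp = d := by simp [opp]

theorem vec_opp (R : Type) [Ring R] (d : Port) : d.opp.vec R = -d.vec R := by
  obtain ⟨c, _ | _⟩ := d <;> simp [vec, opp, ← Pi.single_neg]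

theorem vec_apply_of_ne {R : Type} [Ring R] {d : Port} {c : Fin 2} (h : c ≠ d.1) : d.vec R c = 0 :=
  Pi.single_eq_of_ne h _

end Port

/-- The rank of a port of a node of colour `v`: `1` or `3` on axis `0` and `2` or `4` on axis `1`,
according to the parity of the coordinate along the other axis. -/
def rank (v : Colour) (d : Port) : ℕ := 1 + d.1 + 2 * ((v (d.1 + 1)).val % 2)

theorem rank_eq_or (v : Colour) (d : Port) : rank v d = 1 + d.1 ∨ rank v d = 3 + d.1 := by
  simp only [rank]
  omega

theorem rank_add_vec (v : Colour) (d : Port) : rank (v + d.vec (ZMod 4)) d.opp = rank v d := by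
  have h : d.1 + 1 ≠ d.1 := by simp
  simp [rank, Port.opp, Port.vec_apply_of_ne h]

theorem rank_add_vec_of_ne (v : Colour) {d e : Port} (h : e.1 ≠ d.1) :
    rank (v + d.vec (ZMod 4)) e + rank v e = 4 + 2 * e.1 := by
  have he : e.1 + 1 = d.1 := by omega
  have parity : ∀ (z : ZMod 4) (b : Bool), (z + if b then 1 else -1).val % 2 + z.val % 2 = 1 := by
    decide
  have hz := parity (v d.1) d.2
  simp only [rank, he, Pi.add_apply, Port.vec, Pi.single_eq_same]
  omega

/-- The unary predicate symbols of the reduction, for a machine with labels `Λ`: `port v d` marks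
the port `d` of the nodes of colour `v`, while `zero c` and `pos c` mark nodes whose coordinate `c`
is zero and positive, respectively. -/
inductive Symbol (Λ : Type) : Type
  | port (v : Colour) (d : Port)
  | zero (c : Fin 2)
  | pos (c : Fin 2)
  | label (l : Λ)
  deriving Countable

variable {Λ : Type}

/-- The rules that force a grid, whose nodes are `T 1`-classes of four ports, whose links are
`T 0`-edges between facing ports, and in which every face closes up. -/
noncomputable def geometryRules : List (Rule (Symbol Λ)) :=
  (Finset.univ.toList.map fun (v, d, d') => .succ (.port v d) 1 (.port v d')) ++
  (Finset.univ.toList.map fun (v, d) => .horn (.port v d) [] 1 (.port v d) .eq) ++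
  (Finset.univ.toList.map fun (v, d) =>
    .succ (.port v d) 0 (.port (v + d.vec (ZMod 4)) d.opp)) ++
  (Finset.univ.toList.map fun (v, d) => .horn (.port v d) [] 0 (.port v d) .eq) ++
  ((Finset.univ.filter fun (v, d, d') => rank v d' = rank v d + 1).toList.map fun (v, d, d') =>
    .horn (.port v d) [] 1 (.port v d') (.rel 0)) ++
  ((Finset.univ.filter fun (v, d, d') => rank v d = 1 ∧ rank v d' = 4).toList.map
    fun (v, d, d') => .horn (.port v d) [] 0 (.port v d') (.rel 1))

/-- The rules concluding `c` at every port of a node from `ps` at one of its ports. -/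
noncomputable def nodeRules (ps : List (Symbol Λ)) (c : Conclusion (Symbol Λ)) :
    List (Rule (Symbol Λ)) :=
  Finset.univ.toList.map fun (v, d, d') => .horn (.port v d) ps 1 (.port v d') c

/-- The rules concluding `q` at the neighbour in direction `d` of every node in `ps`. -/
noncomputable def carryRules (ps : List (Symbol Λ)) (d : Port) (q : Symbol Λ) :
    List (Rule (Symbol Λ)) :=
  nodeRules [q] (.pred q) ++ Finset.univ.toList.map fun v =>
    .horn (.port v d) ps 0 (.port (v + d.vec (ZMod 4)) d.opp) (.pred q)

/-- The rules that make `zero c` and `pos c` constant along the axis other than `c`. -/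
noncomputable def counterRules : List (Rule (Symbol Λ)) :=
  Finset.univ.toList.flatMap fun (c, b) =>
    carryRules [.zero c] (c + 1, b) (.zero c) ++ carryRules [.pos c] (c + 1, b) (.pos c)

/-- The rules that place the start label `l` at an origin of the grid. -/
noncomputable def startRules (l : Λ) : List (Rule (Symbol Λ)) :=
  .seed (.port 0 (0, true)) [.zero 0, .zero 1, .label l] :: nodeRules [.label l] (.pred (.label l))

/-- The rules that simulate an instruction at the label `l`. -/
noncomputable def instrRules (l : Λ) : Instr (Fin 2) Λ → List (Rule (Symbol Λ))
  | .inc c l' => carryRules [.label l] (c, true) (.label l') ++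
      carryRules [.label l] (c, true) (.pos c)
  | .dec c l₀ l₁ => nodeRules [.label l, .zero c] (.pred (.label l₀)) ++
      carryRules [.label l, .pos c] (c, false) (.label l₁)
  | .jump l' => nodeRules [.label l] (.pred (.label l'))
  | .halt => []
  | .reject => nodeRules [.label l] .false

variable {A : Type}

/-- The structure describes a run of the machine `I` from `l₀` on a grid. -/
structure Simulates (I : Λ → Instr (Fin 2) Λ) (l₀ : Λ) (U : Symbol Λ → A → Prop)
    (T : Fin 2 → A → A → Prop) : Prop where
  geometry : ∀ r ∈ geometryRules, r.Holds U T
  counter : ∀ r ∈ counterRules, r.Holds U T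
  start : ∀ r ∈ startRules l₀, r.Holds U T
  instr : ∀ l, ∀ r ∈ instrRules l (I l), r.Holds U T

variable {U : Symbol Λ → A → Prop} {T : Fin 2 → A → A → Prop}

/-- The content of `geometryRules`. -/
structure Geometry (U : Symbol Λ → A → Prop) (T : Fin 2 → A → A → Prop) : Prop where
  exists_turn {v : Colour} {d : Port} (d' : Port) {x : A} :
    U (.port v d) x → ∃ y, T 1 x y ∧ U (.port v d') y
  turn_unique {v : Colour} {d : Port} {x y : A} :
    U (.port v d) x → T 1 x y → U (.port v d) y → x = y
  exists_link {v : Colour} {d : Port} {x : A} :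
    U (.port v d) x → ∃ y, T 0 x y ∧ U (.port (v + d.vec (ZMod 4)) d.opp) y
  link_unique {v : Colour} {d : Port} {x y : A} :
    U (.port v d) x → T 0 x y → U (.port v d) y → x = y
  climb {v : Colour} {d d' : Port} {x y : A} : rank v d' = rank v d + 1 →
    U (.port v d) x → T 1 x y → U (.port v d') y → T 0 x y
  close {v : Colour} {d d' : Port} {x y : A} : rank v d = 1 → rank v d' = 4 →
    U (.port v d) x → T 0 x y → U (.port v d') y → T 1 x y

theorem forall_mem_geometryRules_holds :
    (∀ r ∈ geometryRules, r.Holds U T) ↔ Geometry U T := by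
  simp only [geometryRules, List.forall_mem_append, List.forall_mem_map, Finset.mem_toList,
    Finset.mem_univ, Finset.mem_filter, true_and, forall_const, Prod.forall (α := Colour),
    Prod.forall (α := Port), Rule.Holds, Conclusion.Holds, List.not_mem_nil, false_implies,
    implies_true, and_imp]
  constructor
  · rintro ⟨⟨⟨⟨⟨h₁, h₂⟩, h₃⟩, h₄⟩, h₅⟩, h₆⟩
    exact ⟨fun d' => h₁ _ _ d' _, fun hx => h₂ _ _ _ hx _, h₃ _ _ _, fun hx => h₄ _ _ _ hx _,
      fun hr hx => h₅ _ _ _ hr _ hx _, fun hr hr' hx => h₆ _ _ _ hr hr' _ hx _⟩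
  · rintro ⟨h₁, h₂, h₃, h₄, h₅, h₆⟩
    exact ⟨⟨⟨⟨⟨fun _ _ d' _ => h₁ d', fun _ _ _ hx _ => h₂ hx⟩, fun _ _ _ => h₃⟩,
      fun _ _ _ hx _ => h₄ hx⟩, fun _ _ _ hr _ hx _ => h₅ hr hx⟩,
      fun _ _ _ hr hr' _ hx _ => h₆ hr hr' hx⟩

theorem forall_mem_nodeRules_holds {ps : List (Symbol Λ)} {c : Conclusion (Symbol Λ)} :
    (∀ r ∈ nodeRules ps c, r.Holds U T) ↔ ∀ ⦃v d d' x y⦄, U (.port v d) x → (∀ p ∈ ps, U p x) →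
      T 1 x y → U (.port v d') y → c.Holds U T x y := by
  simp only [nodeRules, List.forall_mem_map, Finset.mem_toList, Finset.mem_univ, forall_const,
    Prod.forall (α := Colour), Prod.forall (α := Port), Rule.Holds]
  grind

theorem forall_mem_carryRules_holds {ps : List (Symbol Λ)} {d : Port} {q : Symbol Λ} :
    (∀ r ∈ carryRules ps d q, r.Holds U T) ↔
      (∀ ⦃v d d' x y⦄, U (.port v d) x → U q x → T 1 x y → U (.port v d') y → U q y) ∧
      ∀ ⦃v x y⦄, U (.port v d) x → (∀ p ∈ ps, U p x) → T 0 x y →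
        U (.port (v + d.vec (ZMod 4)) d.opp) y → U q y := by
  rw [carryRules, List.forall_mem_append, forall_mem_nodeRules_holds]
  simp only [List.forall_mem_map, Finset.mem_toList, Finset.mem_univ, forall_const, Rule.Holds,
    Conclusion.Holds, List.forall_mem_singleton]
  grind

end GridRules

/-! ### The grid in a model -/

section GridOfModel

variable {Λ A : Type} {U : Symbol Λ → A → Prop} {T : Fin 2 → A → A → Prop}

/-- A grid node of a model of the geometry rules. It carries its colour, as the rules do not prevent
an element from being a port for several colours. -/
structure Node (U : Symbol Λ → A → Prop) (T : Fin 2 → A → A → Prop) where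
  colour : Colour
  port : Port → A
  mem (d : Port) : U (.port colour d) (port d)
  turn (d d' : Port) : T 1 (port d) (port d')

namespace Geometry

variable [∀ k, IsTrans A (T k)] (hG : Geometry U T) {n n' : Node U T}

include hG

theorem node_eq_of_turn {d d' : Port} (hc : n.colour = n'.colour)
    (h : T 1 (n.port d) (n'.port d')) : n = n' := by
  have hp : n.port = n'.port := funext fun e =>
    hG.turn_unique (n.mem e) (_root_.trans (_root_.trans (n.turn e d) h) (n'.turn d' e))
      (hc ▸ n'.mem e)
  cases n; cases n'; simp_all

theorem exists_node_port_eq {v : Colour} {d : Port} {x : A} (hx : U (.port v d) x) :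
    ∃ n : Node U T, n.colour = v ∧ n.port d = x := by
  choose y hxy hy using fun d' => hG.exists_turn d' hx
  have back (d' : Port) : T 1 (y d') x := by
    obtain ⟨z, hyz, hz⟩ := hG.exists_turn d (hy d')
    rwa [hG.turn_unique hx (_root_.trans (hxy d') hyz) hz]
  exact ⟨⟨v, y, hy, fun d' d'' => _root_.trans (back d') (hxy d'')⟩, rfl,
    (hG.turn_unique hx (hxy d) (hy d)).symm⟩

theorem exists_neighbour (d : Port) (n : Node U T) :
    ∃ n' : Node U T, n'.colour = n.colour + d.vec (ZMod 4) ∧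
      T 0 (n.port d) (n'.port d.opp) := by
  obtain ⟨y, hxy, hy⟩ := hG.exists_link (n.mem d)
  obtain ⟨n', hc, rfl⟩ := hG.exists_node_port_eq hy
  exact ⟨n', hc, hxy⟩

/-- The neighbour of a grid node in direction `d`. -/
noncomputable def step (d : Port) (n : Node U T) : Node U T :=
  (hG.exists_neighbour d n).choose

theorem step_colour (d : Port) (n : Node U T) :
    (hG.step d n).colour = n.colour + d.vec (ZMod 4) :=
  (hG.exists_neighbour d n).choose_spec.1

theorem link (d : Port) (n : Node U T) : T 0 (n.port d) ((hG.step d n).port d.opp) :=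
  (hG.exists_neighbour d n).choose_spec.2

theorem step_opp_step (d : Port) (n : Node U T) : hG.step d.opp (hG.step d n) = n := by
  set n' := hG.step d.opp (hG.step d n) with hn'
  have hc : n'.colour = n.colour := by simp [hn', step_colour, Port.vec_opp]
  have hT : T 0 (n.port d) (n'.port d) := by
    have := _root_.trans (hG.link d n) (hG.link d.opp (hG.step d n))
    rwa [Port.opp_opp] at this
  have hd : n.port d = n'.port d := hG.link_unique (n.mem d) hT (hc ▸ n'.mem d)
  exact (hG.node_eq_of_turn hc.symm (d := d) (d' := d) (hd ▸ n.turn d d)).symm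

theorem step_step_opp (d : Port) (n : Node U T) : hG.step d (hG.step d.opp n) = n := by
  simpa only [Port.opp_opp] using hG.step_opp_step d.opp n

theorem climb_step {d e : Port} (h : rank (hG.step d n).colour e = rank n.colour d + 1) :
    T 0 (n.port d) ((hG.step d n).port e) := by
  refine _root_.trans (hG.link d n) (hG.climb ?_ ((hG.step d n).mem _) ((hG.step d n).turn _ _)
    ((hG.step d n).mem _))
  rw [h, step_colour, rank_add_vec]

/-- The face at the node `n` spanned by the directions `(0, s)` and `(1, t)` closes up. -/
def FaceCloses (s t : Bool) (n : Node U T) : Prop :=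
  hG.step (1, t) (hG.step (0, s) n) = hG.step (0, s) (hG.step (1, t) n)

-- Walking round the face from the rank 1 port, the ports passed have ranks 1, 2, 3, 4.
theorem faceCloses_of_rank {s t : Bool} (h₁ : rank n.colour (0, s) = 1)
    (h₄ : rank n.colour (1, t) = 4) : hG.FaceCloses s t n := by
  set h : Port := (0, s)
  set w : Port := (1, t)
  have hwh : w.1 ≠ h.1 := Fin.zero_ne_one.symm
  set a := hG.step h n with ha
  set b := hG.step w a with hb
  set c := hG.step h.opp b with hc
  have hcc : c.colour = n.colour + w.vec (ZMod 4) := by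
    simp only [hc, hb, ha, step_colour, Port.vec_opp]
    abel
  have hec : (hG.step w.opp c).colour = n.colour := by simp [step_colour, hcc, Port.vec_opp]
  have ra : rank a.colour w = 2 ∧ rank a.colour h.opp = 1 := by
    have := rank_add_vec_of_ne n.colour hwh
    rw [ha, step_colour, rank_add_vec]
    exact ⟨by simpa [h₄, w] using this, h₁⟩
  have rb : rank b.colour h.opp = 3 := by
    have := rank_add_vec_of_ne a.colour (d := w) (e := h.opp) hwh.symm
    rw [ra.2, ← step_colour hG] at this
    exact Nat.add_right_cancel (this : _ = 3 + 1)
  have rc : rank c.colour w.opp = 4 := by rw [hcc, rank_add_vec, h₄]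
  have t₁ : T 0 (n.port h) (a.port w) := hG.climb_step (by rw [h₁, ra.1])
  have t₂ : T 0 (a.port w) (b.port h.opp) := hG.climb_step (by rw [rb, ra.1])
  have t₃ : T 0 (b.port h.opp) (c.port w.opp) := hG.climb_step (by rw [rc, rb])
  have t₄ : T 0 (c.port w.opp) ((hG.step w.opp c).port w) := by
    simpa only [Port.opp_opp] using hG.link w.opp c
  have he : n = hG.step w.opp c := hG.node_eq_of_turn hec.symm <| hG.close h₁ h₄ (n.mem h)
    (_root_.trans (_root_.trans t₁ t₂) (_root_.trans t₃ t₄)) (hec ▸ (hG.step w.opp c).mem w)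
  calc hG.step w (hG.step h n) = hG.step h c := (hG.step_step_opp h b).symm
    _ = hG.step h (hG.step w n) := by rw [(congrArg _ he).trans (hG.step_step_opp w c)]

theorem FaceCloses.flip_fst {s t : Bool} (h : hG.FaceCloses (!s) t (hG.step (0, s) n)) :
    hG.FaceCloses s t n :=
  calc hG.step (1, t) (hG.step (0, s) n)
      = hG.step (0, s) (hG.step (0, !s) (hG.step (1, t) (hG.step (0, s) n))) :=
        (hG.step_step_opp (0, s) _).symm
    _ = hG.step (0, s) (hG.step (1, t) (hG.step (0, !s) (hG.step (0, s) n))) :=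
        congrArg _ h.symm
    _ = hG.step (0, s) (hG.step (1, t) n) := by
        rw [show hG.step (0, !s) (hG.step (0, s) n) = n from hG.step_opp_step (0, s) n]

theorem FaceCloses.flip_snd {s t : Bool} (h : hG.FaceCloses s (!t) (hG.step (1, t) n)) :
    hG.FaceCloses s t n :=
  calc hG.step (1, t) (hG.step (0, s) n)
      = hG.step (1, t) (hG.step (0, s) (hG.step (1, !t) (hG.step (1, t) n))) := by
        rw [show hG.step (1, !t) (hG.step (1, t) n) = n from hG.step_opp_step (1, t) n]
    _ = hG.step (1, t) (hG.step (1, !t) (hG.step (0, s) (hG.step (1, t) n))) :=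
        congrArg _ h.symm
    _ = hG.step (0, s) (hG.step (1, t) n) := hG.step_step_opp (1, t) _

theorem faceCloses (s t : Bool) (n : Node U T) : hG.FaceCloses s t n := by
  have of_rank_snd (s t) (n : Node U T) (h₄ : rank n.colour (1, t) = 4) :
      hG.FaceCloses s t n := by
    rcases rank_eq_or n.colour (0, s) with h₁ | h₃
    · exact hG.faceCloses_of_rank h₁ h₄
    · have h₁ := rank_add_vec_of_ne n.colour (d := (1, t)) (e := (0, s)) Fin.zero_ne_one
      rw [h₃, ← hG.step_colour] at h₁
      refine .flip_snd hG (hG.faceCloses_of_rank (Nat.add_right_cancel (h₁ : _ = 1 + 3)) ?_)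
      rw [step_colour]
      exact (rank_add_vec n.colour (1, t)).trans h₄
  rcases rank_eq_or n.colour (1, t) with h₂ | h₄
  · have h₄ := rank_add_vec_of_ne n.colour (d := (0, s)) (e := (1, t)) Fin.zero_ne_one.symm
    rw [h₂, ← hG.step_colour] at h₄
    exact .flip_fst hG (of_rank_snd _ _ _ (Nat.add_right_cancel (h₄ : _ = 4 + 2)))
  · exact of_rank_snd s t n h₄

theorem step_comm :
    Function.Commute (hG.step (1, true)) (hG.step (0, true)) := hG.faceCloses true true

/-- The grid node with coordinates `s` relative to the origin `n`. -/
noncomputable def grid (n : Node U T) (s : Fin 2 → ℕ) : Node U T :=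
  (hG.step (1, true))^[s 1] ((hG.step (0, true))^[s 0] n)

theorem grid_update_succ (n : Node U T) (s : Fin 2 → ℕ) (c : Fin 2) :
    hG.grid n (update s c (s c + 1)) = hG.step (c, true) (hG.grid n s) := by
  match c with
  | 0 => simp [grid, iterate_succ_apply', (hG.step_comm.iterate_left _).eq]
  | 1 => simp [grid, iterate_succ_apply']

theorem step_grid_of_eq_succ (n : Node U T) {s : Fin 2 → ℕ} {c : Fin 2} {k : ℕ}
    (h : s c = k + 1) : hG.step (c, false) (hG.grid n s) = hG.grid n (update s c k) := by
  have := hG.grid_update_succ n (update s c k) c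
  rw [update_idem, update_self, ← h, update_eq_self] at this
  rw [this]
  exact hG.step_opp_step (c, true) _

end Geometry

/-- A predicate holds of a grid node when it holds of all its ports. -/
def Node.Has (n : Node U T) (p : Symbol Λ) : Prop :=
  ∀ d, U p (n.port d)

section Has

variable {n : Node U T} {ps : List (Symbol Λ)} {p q : Symbol Λ}

theorem Node.Has.of_port {d : Port} (h : ∀ r ∈ nodeRules [p] (.pred p), r.Holds U T)
    (hp : U p (n.port d)) : n.Has p := fun d' =>
  forall_mem_nodeRules_holds.1 h (n.mem d) (by simpa using hp) (n.turn d d') (n.mem d')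

theorem Node.Has.of_nodeRules (h : ∀ r ∈ nodeRules ps (.pred q), r.Holds U T)
    (hps : ∀ p ∈ ps, n.Has p) : n.Has q := fun d =>
  forall_mem_nodeRules_holds.1 h (n.mem d) (fun p hp => hps p hp d) (n.turn d d) (n.mem d)

theorem not_has_of_nodeRules_false (h : ∀ r ∈ nodeRules [p] .false, r.Holds U T) :
    ¬ n.Has p := fun hp =>
  forall_mem_nodeRules_holds.1 h (n.mem 0) (by simpa using hp 0) (n.turn 0 0) (n.mem 0)

variable [∀ k, IsTrans A (T k)] (hG : Geometry U T)

theorem Node.Has.of_carryRules {d : Port} (h : ∀ r ∈ carryRules ps d q, r.Holds U T)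
    (hps : ∀ p ∈ ps, n.Has p) : (hG.step d n).Has q := by
  refine .of_port (fun r hr => h r (List.mem_append_left _ hr)) (d := d.opp) ?_
  refine (forall_mem_carryRules_holds.1 h).2 (n.mem d) (fun p hp => hps p hp d) (hG.link d n) ?_
  exact hG.step_colour d n ▸ (hG.step d n).mem d.opp

theorem has_grid_congr {c : Fin 2} (h : ∀ b, ∀ r ∈ carryRules [p] (c + 1, b) p, r.Holds U T)
    {s s' : Fin 2 → ℕ} (hs : s c = s' c) :
    (hG.grid n s).Has p ↔ (hG.grid n s').Has p := by
  have const (s : Fin 2 → ℕ) (k : ℕ) : (hG.grid n (update s (c + 1) k)).Has p ↔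
      (hG.grid n (update s (c + 1) 0)).Has p := by
    induction k with
    | zero => rfl
    | succ k ih =>
      have := hG.grid_update_succ n (update s (c + 1) k) (c + 1)
      rw [update_self, update_idem] at this
      rw [← ih, this]
      refine ⟨fun hp => ?_, fun hp => .of_carryRules hG (h true) (by simpa using hp)⟩
      have := Node.Has.of_carryRules hG (h false) (List.forall_mem_singleton.2 hp)
      rwa [show hG.step (c + 1, false) _ = _ from hG.step_opp_step (c + 1, true) _] at this
  have hss : update s (c + 1) 0 = update s' (c + 1) 0 := by
    funext c'
    obtain rfl | hc := eq_or_ne c' (c + 1)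
    · simp
    · obtain rfl : c' = c := by omega
      simp [hs]
  rw [← update_eq_self (c + 1) s, ← update_eq_self (c + 1) s', const, const s', hss]

end Has

section Simulates

variable {I : Λ → Instr (Fin 2) Λ} {l₀ : Λ}

theorem Simulates.carryRules_holds (h : Simulates I l₀ U T) (c : Fin 2) (b : Bool) :
    (∀ r ∈ carryRules [.zero c] (c + 1, b) (.zero c), r.Holds U T) ∧
      ∀ r ∈ carryRules [.pos c] (c + 1, b) (.pos c), r.Holds U T := by
  simpa [counterRules, or_imp, forall_and] using
    fun r hr => h.counter r (List.mem_flatMap.2 ⟨(c, b), by simp, List.mem_append.2 hr⟩)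

variable [∀ k, IsTrans A (T k)]

/-- The grid with origin `n` carries the marks of the configuration `a`. -/
structure Tracks (hG : Geometry U T) (n : Node U T) (a : Λ × (Fin 2 → ℕ)) : Prop where
  label : (hG.grid n a.2).Has (.label a.1)
  pos (c : Fin 2) (s : Fin 2 → ℕ) : 0 < s c → s c ≤ a.2 c → (hG.grid n s).Has (.pos c)

namespace Simulates

variable (h : Simulates I l₀ U T)

include h

theorem exists_origin (hG : Geometry U T) : ∃ n : Node U T,
    Tracks hG n (l₀, 0) ∧ ∀ c s, s c = 0 → (hG.grid n s).Has (.zero c) := by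
  obtain ⟨⟨x, hx, hps⟩, hl⟩ := List.forall_mem_cons.1 h.start
  obtain ⟨n, -, rfl⟩ := hG.exists_node_port_eq hx
  have zero (c : Fin 2) : n.Has (.zero c) :=
    .of_port (fun r hr => (h.carryRules_holds c true).1 r (List.mem_append_left _ hr))
      (hps _ (by fin_cases c <;> simp))
  refine ⟨n, ⟨.of_port hl (hps _ (by simp)), ?_⟩, fun c s hs => ?_⟩
  · exact fun c s h₀ h₁ => absurd h₀ (by simpa using h₁)
  · exact (has_grid_congr hG (fun b => (h.carryRules_holds c b).1) (s' := 0) hs).2 (zero c)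

theorem tracks_of_step {hG : Geometry U T} {n : Node U T}
    (hn : ∀ c s, s c = 0 → (hG.grid n s).Has (.zero c)) {a b : Λ × (Fin 2 → ℕ)}
    (hab : Step I a b) (ha : Tracks hG n a) : Tracks hG n b := by
  have instr {l i} (hi : I l = i) : ∀ r ∈ instrRules l i, r.Holds U T := hi ▸ h.instr l
  cases hab with
  | @inc l l' c s hi =>
    obtain ⟨hl, hp⟩ := List.forall_mem_append.1 (instr hi)
    refine ⟨?_, fun c' s' h₀ h₁ => ?_⟩
    · exact hG.grid_update_succ n s c ▸ .of_carryRules hG hl (by simpa using ha.label)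
    · obtain hle | hlt := le_or_gt (s' c') (s c')
      · exact ha.pos c' s' h₀ hle
      · obtain rfl : c' = c := by_contra fun hne => by simp_all [hlt.not_ge]
        have hs : update s c' (s c' + 1) c' = s' c' := le_antisymm (by simpa using hlt) h₁
        refine (has_grid_congr hG (fun b => (h.carryRules_holds c' b).2) hs).1 ?_
        exact hG.grid_update_succ n s c' ▸ .of_carryRules hG hp (by simpa using ha.label)
  | @decZero l l' l'' c s hi h₀ =>
    refine ⟨.of_nodeRules (List.forall_mem_append.1 (instr hi)).1 ?_, ha.pos⟩
    simpa using ⟨ha.label, hn c s h₀⟩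
  | @decSucc l l' l'' c s k hi hk =>
    refine ⟨?_, fun c' s' h₀ h₁ => ha.pos c' s' h₀ (h₁.trans ?_)⟩
    · rw [← hG.step_grid_of_eq_succ n hk]
      refine .of_carryRules hG (List.forall_mem_append.1 (instr hi)).2 ?_
      simpa using ⟨ha.label, ha.pos c s (by omega) le_rfl⟩
    · exact update_le_self_iff.2 (by omega : k ≤ s c) c'
  | jump hi => exact ⟨.of_nodeRules (instr hi) (by simpa using ha.label), ha.pos⟩

theorem not_rejectsFrom : ¬ RejectsFrom I (l₀, 0) := by
  rintro ⟨b, hab, hb⟩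
  have hG : Geometry U T := forall_mem_geometryRules_holds.1 h.geometry
  obtain ⟨n, h₀, hn⟩ := h.exists_origin hG
  have htr : Tracks hG n b := by
    clear hb
    induction hab with
    | refl => exact h₀
    | tail _ hbc ih => exact h.tracks_of_step hn hbc ih
  exact not_has_of_nodeRules_false (fun r hr => h.instr b.1 r (by simpa [hb, instrRules] using hr))
    htr.label

end Simulates
end Simulates
end GridOfModel

/-! ### The torus model -/

section Torus

/-- The elements of the finite model: the ports of the nodes of an `N × N` torus. -/
abbrev TorusPort (N : ℕ) : Type := (Fin 2 → ZMod N) × Port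

variable {N : ℕ}

/-- The colour of a torus node, which is well behaved when `4 ∣ N`. -/
def torusColour (p : Fin 2 → ZMod N) : Colour := fun i => (p i).cast

/-- The rank of a port of the torus, as an integer. -/
def height (x : TorusPort N) : ℤ := rank (torusColour x.1) x.2

/-- The cone order on the torus: in the universal cover, where the port `d` of the node `p` sits at
`p + d / 2`, some displacement from `x` to `y` is at most half the gain in height. -/
def ConeRel (x y : TorusPort N) : Prop :=
  ∃ D : Fin 2 → ℤ, (∀ i, y.1 i = x.1 i + D i) ∧
    ∀ i, |2 * D i + y.2.vec ℤ i - x.2.vec ℤ i| ≤ height y - height x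

theorem ConeRel.trans {x y z : TorusPort N} (hxy : ConeRel x y) (hyz : ConeRel y z) :
    ConeRel x z := by
  obtain ⟨D, hD, hD'⟩ := hxy
  obtain ⟨E, hE, hE'⟩ := hyz
  refine ⟨D + E, fun i => ?_, fun i => ?_⟩
  · simp [hD, hE, add_assoc]
  · calc |2 * (D + E) i + z.2.vec ℤ i - x.2.vec ℤ i|
        = |(2 * D i + y.2.vec ℤ i - x.2.vec ℤ i) + (2 * E i + z.2.vec ℤ i - y.2.vec ℤ i)| := by
          rw [Pi.add_apply]; ring_nf
      _ ≤ (height y - height x) + (height z - height y) :=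
          (abs_add_le _ _).trans (add_le_add (hD' i) (hE' i))
      _ = height z - height x := by ring

theorem Port.intCast_vec (d : Port) (R : Type) [Ring R] (i : Fin 2) :
    ((d.vec ℤ i : ℤ) : R) = d.vec R i := by
  obtain ⟨c, _ | _⟩ := d <;> obtain rfl | h := eq_or_ne i c <;> simp [vec, *]

theorem Port.abs_vec_sub_vec_le_one : ∀ {d d' : Port}, d.1 ≠ d'.1 → ∀ i,
    |d'.vec ℤ i - d.vec ℤ i| ≤ 1 := by
  decide

theorem fst_ne_of_rank_ne {v : Colour} {d d' : Port} (h : rank v d ≠ rank v d') : d.1 ≠ d'.1 :=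
  fun hd => h (by simp [rank, hd])

theorem ConeRel.of_fst_eq {x y : TorusPort N} (h : x.1 = y.1) (hr : height y = height x + 1) :
    ConeRel x y := by
  refine ⟨0, by simp [h], fun i => ?_⟩
  have hne : x.2.1 ≠ y.2.1 := by
    refine fst_ne_of_rank_ne (v := torusColour x.1) ?_
    simp only [height, h] at hr ⊢
    omega
  simpa [hr] using Port.abs_vec_sub_vec_le_one hne i

variable {x y : TorusPort N}

theorem torusColour_add_intCast (hN : 4 ∣ N) (p : Fin 2 → ZMod N) (D : Fin 2 → ℤ) :
    torusColour (fun i => p i + (D i : ZMod N)) = fun i => torusColour p i + (D i : ZMod 4) := by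
  funext i
  simp [torusColour, ZMod.cast_add hN, ZMod.cast_intCast hN]

theorem torusColour_add_vec (hN : 4 ∣ N) (p : Fin 2 → ZMod N) (d : Port) :
    torusColour (p + d.vec (ZMod N)) = torusColour p + d.vec (ZMod 4) := by
  have := torusColour_add_intCast hN p (d.vec ℤ)
  simp only [Port.intCast_vec] at this
  exact this

theorem ConeRel.link (hN : 4 ∣ N) (x : TorusPort N) :
    ConeRel x (x.1 + x.2.vec (ZMod N), x.2.opp) := by
  refine ⟨x.2.vec ℤ, fun i => by simp [Port.intCast_vec], fun i => ?_⟩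
  rw [height, torusColour_add_vec hN, rank_add_vec, ← height, sub_self, Port.vec_opp]
  simp [two_mul]

theorem ConeRel.fst_eq_of_opp (h : ConeRel x y) (hy : y.2 = x.2.opp)
    (hc : torusColour y.1 = torusColour x.1 + x.2.vec (ZMod 4)) :
    y.1 = x.1 + x.2.vec (ZMod N) := by
  obtain ⟨D, hD, hD'⟩ := h
  have hr : height y = height x := by simp only [height, hy, hc, rank_add_vec]
  funext i
  have hi : D i = x.2.vec ℤ i := by
    have := hD' i
    rw [hr, sub_self, abs_nonpos_iff, hy, Port.vec_opp, Pi.neg_apply] at this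
    omega
  rw [hD, hi, Port.intCast_vec, Pi.add_apply]

theorem ConeRel.fst_eq_of_snd_eq (h : ConeRel x y) (hy : x.2 = y.2)
    (hc : torusColour x.1 = torusColour y.1) : x.1 = y.1 := by
  obtain ⟨D, hD, hD'⟩ := h
  have hr : height y = height x := by simp only [height, hy, hc]
  funext i
  have hi : D i = 0 := by
    have := hD' i
    rw [hr, sub_self, abs_nonpos_iff, hy] at this
    omega
  simp [hD, hi]

theorem ConeRel.fst_eq_of_height (hN : 4 ∣ N) (h : ConeRel x y)
    (hc : torusColour x.1 = torusColour y.1) (hr : height y = height x + 3) : x.1 = y.1 := by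
  obtain ⟨D, hD, hD'⟩ := h
  have hne : x.2.1 ≠ y.2.1 := fst_ne_of_rank_ne (v := torusColour x.1) <| by
    simp only [height, hc] at hr ⊢
    omega
  funext i
  have hdvd : 4 ∣ D i := by
    have := congrFun (torusColour_add_intCast hN x.1 D) i
    rw [← funext hD, ← hc, left_eq_add] at this
    exact (ZMod.intCast_zmod_eq_zero_iff_dvd _ 4).1 this
  have h₁ := abs_le.1 (Port.abs_vec_sub_vec_le_one hne i)
  have h₃ := abs_le.1 (hD' i)
  have : D i = 0 := by omega
  simp [hD i, this]

variable {Λ : Type} {I : Λ → Instr (Fin 2) Λ} {l₀ : Λ}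

/-- The unary predicates of the torus model: its nodes carry the labels of the configurations in the
run of the machine `I`. -/
def torusPred (I : Λ → Instr (Fin 2) Λ) (l₀ : Λ) : Symbol Λ → TorusPort N → Prop
  | .port v d, x => torusColour x.1 = v ∧ x.2 = d
  | .zero c, x => x.1 c = 0
  | .pos c, x => x.1 c ≠ 0
  | .label l, x => ∃ s, Reaches I (l₀, 0) (l, s) ∧ x.1 = fun i => (s i : ZMod N)

/-- The binary predicates of the torus model. -/
def torusRel : Fin 2 → TorusPort N → TorusPort N → Prop :=
  ![ConeRel, fun x y => x.1 = y.1]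

theorem torusPred_of_fst_eq {q : Symbol Λ} (hq : ∀ v d, q ≠ .port v d) (hxy : x.1 = y.1)
    (hx : torusPred I l₀ q x) : torusPred I l₀ q y := by
  cases q <;> simp_all [torusPred]

theorem torus_geometry (hN : 4 ∣ N) :
    Geometry (torusPred I l₀ : Symbol Λ → TorusPort N → Prop) torusRel where
  exists_turn d' x hx := ⟨(x.1, d'), rfl, hx.1, rfl⟩
  turn_unique hx hxy hy := Prod.ext hxy (hx.2.trans hy.2.symm)
  exists_link := by
    rintro _ _ x ⟨rfl, rfl⟩
    exact ⟨_, ConeRel.link hN x, torusColour_add_vec hN _ _, rfl⟩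
  link_unique hx hxy hy :=
    have h := hx.2.trans hy.2.symm
    Prod.ext (ConeRel.fst_eq_of_snd_eq hxy h (hx.1.trans hy.1.symm)) h
  climb := by
    rintro _ _ _ x y hr ⟨rfl, rfl⟩ hxy ⟨hy, rfl⟩
    exact ConeRel.of_fst_eq hxy (by simp [height, hy, hr])
  close := by
    rintro _ _ _ x y hr hr' ⟨rfl, rfl⟩ hxy ⟨hy, rfl⟩
    exact ConeRel.fst_eq_of_height hN hxy hy.symm (by simp [height, hy, hr, hr'])

theorem torus_nodeRules {ps : List (Symbol Λ)} {c : Conclusion (Symbol Λ)}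
    (h : ∀ x y : TorusPort N, (∀ p ∈ ps, torusPred I l₀ p x) → x.1 = y.1 →
      c.Holds (torusPred I l₀) torusRel x y) :
    ∀ r ∈ nodeRules ps c, r.Holds (torusPred I l₀ : _ → TorusPort N → Prop) torusRel :=
  forall_mem_nodeRules_holds.2 fun _ _ _ x y _ hps hxy _ => h x y hps hxy

theorem torus_carryRules {ps : List (Symbol Λ)} {d : Port} {q : Symbol Λ}
    (hq : ∀ v d, q ≠ .port v d)
    (h : ∀ x y : TorusPort N, (∀ p ∈ ps, torusPred I l₀ p x) → y.1 = x.1 + d.vec (ZMod N) →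
      torusPred I l₀ q y) :
    ∀ r ∈ carryRules ps d q, r.Holds (torusPred I l₀ : _ → TorusPort N → Prop) torusRel := by
  refine forall_mem_carryRules_holds.2 ⟨fun _ _ _ _ _ _ hx hxy _ =>
    torusPred_of_fst_eq hq hxy hx, ?_⟩
  rintro _ x y ⟨rfl, rfl⟩ hps hxy ⟨hc, hy⟩
  exact h x y hps (ConeRel.fst_eq_of_opp hxy hy hc)

theorem torus_counterRules :
    ∀ r ∈ counterRules, r.Holds (torusPred I l₀ : _ → TorusPort N → Prop) torusRel := by
  simp only [counterRules, List.forall_mem_flatMap, List.forall_mem_append]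
  rintro ⟨c, b⟩ -
  have vec_eq_zero : Port.vec (ZMod N) (c + 1, b) c = 0 := Port.vec_apply_of_ne (by simp)
  refine ⟨torus_carryRules (by simp) fun x y hx hy => ?_,
    torus_carryRules (by simp) fun x y hx hy => ?_⟩ <;>
  · have := hx _ List.mem_cons_self
    simp_all [torusPred]

theorem torus_startRules :
    ∀ r ∈ startRules l₀, r.Holds (torusPred I l₀ : _ → TorusPort N → Prop) torusRel := by
  refine List.forall_mem_cons.2 ⟨⟨(0, (0, true)), ?_, ?_⟩, torus_nodeRules fun x y hx hxy => ?_⟩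
  · exact ⟨funext fun _ => ZMod.cast_zero, rfl⟩
  · simpa [torusPred] using ⟨0, .refl, funext fun _ => by simp⟩
  · exact torusPred_of_fst_eq (by simp) hxy (hx _ List.mem_cons_self)

theorem natCast_update_succ (s : Fin 2 → ℕ) (c : Fin 2) :
    (fun i => ((update s c (s c + 1) i : ℕ) : ZMod N)) =
      (fun i => (s i : ZMod N)) + Port.vec (ZMod N) (c, true) := by
  funext i
  obtain rfl | h := eq_or_ne i c <;> simp [Port.vec, *]

theorem natCast_update_pred {s : Fin 2 → ℕ} {c : Fin 2} {k : ℕ} (h : s c = k + 1) :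
    (fun i => ((update s c k i : ℕ) : ZMod N)) =
      (fun i => (s i : ZMod N)) + Port.vec (ZMod N) (c, false) := by
  funext i
  obtain rfl | h := eq_or_ne i c <;> simp [Port.vec, *]

theorem torus_instrRules (hlt : ∀ c, Reaches I (l₀, 0) c → ∀ i, c.2 i < N)
    (hrej : ¬ RejectsFrom I (l₀, 0)) (l : Λ) :
    ∀ r ∈ instrRules l (I l), r.Holds (torusPred I l₀ : _ → TorusPort N → Prop) torusRel := by
  have cast_eq_zero {l s} (hs : Reaches I (l₀, 0) (l, s)) {c} : (s c : ZMod N) = 0 ↔ s c = 0 := by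
    rw [ZMod.natCast_eq_zero_iff]
    exact ⟨fun h => Nat.eq_zero_of_dvd_of_lt h (hlt _ hs c), fun h => h ▸ dvd_zero N⟩
  have exists_reaches {ps : List (Symbol Λ)} {x : TorusPort N}
      (h : ∀ p ∈ .label l :: ps, torusPred I l₀ p x) :
      ∃ s, Reaches I (l₀, 0) (l, s) ∧ x.1 = fun i => (s i : ZMod N) :=
    h (.label l) List.mem_cons_self
  match hi : I l with
  | .inc c l' =>
    refine List.forall_mem_append.2 ⟨torus_carryRules (by simp) fun x y hx hy => ?_,
      torus_carryRules (by simp) fun x y hx hy => ?_⟩ <;>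
      obtain ⟨s, hs, hxs⟩ := exists_reaches hx <;>
      have hs' := hs.tail (.inc hi) <;>
      rw [hxs, ← natCast_update_succ] at hy
    · exact ⟨_, hs', hy⟩
    · rw [torusPred, hy]
      exact (cast_eq_zero hs').not.2 (by simp)
  | .dec c l' l'' =>
    refine List.forall_mem_append.2 ⟨torus_nodeRules fun x y hx hxy => ?_,
      torus_carryRules (by simp) fun x y hx hy => ?_⟩ <;>
      obtain ⟨s, hs, hxs⟩ := exists_reaches hx <;>
      have hc := (List.forall_mem_cons.1 (List.forall_mem_cons.1 hx).2).1 <;>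
      rw [torusPred, hxs] at hc
    · exact ⟨s, hs.tail (.decZero hi ((cast_eq_zero hs).1 hc)), hxy ▸ hxs⟩
    · obtain ⟨k, hk⟩ := Nat.exists_eq_succ_of_ne_zero ((cast_eq_zero hs).not.1 hc)
      exact ⟨_, hs.tail (.decSucc hi hk), by rw [hy, hxs, natCast_update_pred hk]⟩
  | .jump l' =>
    refine torus_nodeRules fun x y hx hxy => ?_
    obtain ⟨s, hs, hxs⟩ := exists_reaches hx
    exact ⟨s, hs.tail (.jump hi), hxy ▸ hxs⟩
  | .halt => simp [instrRules]
  | .reject =>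
    refine torus_nodeRules fun x y hx _ => ?_
    obtain ⟨s, hs, -⟩ := exists_reaches hx
    exact hrej ⟨_, hs, hi⟩

theorem HaltsFrom.exists_simulates (h : HaltsFrom I (l₀, 0)) :
    ∃ (A : Type) (_ : Nonempty A) (_ : Finite A) (U : Symbol Λ → A → Prop)
      (T : Fin 2 → A → A → Prop), IsTrans A (T 0) ∧ Equivalence (T 1) ∧ Simulates I l₀ U T := by
  obtain ⟨M, hM⟩ := (h.finite_reachable.image fun c => c.2 0 + c.2 1).bddAbove
  have hlt (c) (hc : Reaches I (l₀, 0) c) (i : Fin 2) : c.2 i < 4 * (M + 1) := by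
    have : c.2 0 + c.2 1 ≤ M := hM ⟨c, hc, rfl⟩
    match i with
    | 0 | 1 => omega
  refine ⟨TorusPort (4 * (M + 1)), inferInstance, inferInstance, torusPred I l₀, torusRel,
    ⟨fun _ _ _ => ConeRel.trans⟩, ⟨fun _ => rfl, Eq.symm, Eq.trans⟩,
    ⟨forall_mem_geometryRules_holds.2 (torus_geometry (dvd_mul_right 4 _)),
      torus_counterRules, torus_startRules, torus_instrRules hlt h.not_rejectsFrom⟩⟩

end Torus

/-! ### Rules as sentences -/

section Formula

variable {P A : Type} (cd : P → ℕ)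

/-- The formula expressing a conclusion about `x₁` and `x₂`, under a numbering `cd` of the predicate
symbols. -/
def Conclusion.toF : Conclusion P → F 2
  | eq => .eqatom
  | rel k => .batom k
  | pred p => .patom (cd p) one_le_two le_rfl
  | false => .fls le_rfl

/-- The sentence expressing a rule, under a numbering `cd` of the predicate symbols. -/
def Rule.toF : Rule P → F 0
  | succ p k q => .all zero_le_one <| .imp (.patom (cd p) le_rfl one_le_two) <|
      .ex le_rfl <| .and (.batom k) (.patom (cd q) one_le_two le_rfl)
  | horn p ps k q c => .all zero_le_one <| .imp (.patom (cd p) le_rfl one_le_two) <|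
      ps.foldr (fun p' φ => .imp (.patom (cd p') le_rfl one_le_two) φ) <|
        .all le_rfl <| .imp (.batom k) <| .imp (.patom (cd q) one_le_two le_rfl) (c.toF cd)
  | seed p ps => .ex zero_le_one <| .and (.patom (cd p) le_rfl one_le_two) <|
      ps.foldr (fun p' φ => .and (.patom (cd p') le_rfl one_le_two) φ) (.not (.fls one_le_two))

/-- The conjunction of the sentences expressing the rules in a list. -/
def conj (rs : List (Rule P)) : F 0 :=
  rs.foldr (fun r φ => .and (r.toF cd) φ) (.not (.fls zero_le_two))

theorem Conclusion.sat_toF (M : Str A) (c : Conclusion P) (v : Fin 2 → A) :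
    Sat M (c.toF cd) v ↔ c.Holds (fun p => M.U (cd p)) M.T (v 0) (v 1) := by
  cases c <;> rfl

theorem Rule.sat_toF (M : Str A) (r : Rule P) (v : Fin 0 → A) :
    Sat M (r.toF cd) v ↔ r.Holds (fun p => M.U (cd p)) M.T := by
  have snoc_zero (a b : A) : (Fin.snoc (Fin.snoc v a : Fin 1 → A) b : Fin 2 → A) 0 = a := rfl
  have snoc_one (a b : A) : (Fin.snoc (Fin.snoc v a : Fin 1 → A) b : Fin 2 → A) 1 = b := rfl
  cases r with
  | succ => rfl
  | horn p ps k q c =>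
    refine forall_congr' fun a => imp_congr_right fun _ => ?_
    induction ps with
    | nil =>
      simp only [List.foldr_nil, Sat, Conclusion.sat_toF, snoc_zero, snoc_one, List.not_mem_nil,
        false_implies, implies_true, forall_const]
      rfl
    | cons p' ps ih =>
      simp only [List.foldr_cons, Sat, ih, List.forall_mem_cons, and_imp]
      rfl
  | seed p ps =>
    refine exists_congr fun a => and_congr_right fun _ => ?_
    induction ps with
    | nil => simp [Sat]
    | cons p' ps ih =>
      simp only [List.foldr_cons, Sat, ih, List.forall_mem_cons]
      rfl

theorem sat_conj (M : Str A) (rs : List (Rule P)) (v : Fin 0 → A) :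
    Sat M (conj cd rs) v ↔ ∀ r ∈ rs, r.Holds (fun p => M.U (cd p)) M.T := by
  induction rs with
  | nil => simp [conj, Sat]
  | cons r rs ih =>
    rw [List.forall_mem_cons, ← ih, ← Rule.sat_toF cd M r v]
    rfl

theorem Conclusion.guarded_toF (c : Conclusion P) : Guarded (c.toF cd) := by
  cases c <;> constructor

theorem Rule.guarded_toF (r : Rule P) : Guarded (r.toF cd) := by
  cases r with
  | succ =>
    exact .all0 ⟨_, _, _, rfl⟩ (.ex1 (.inr (.inl ⟨_, rfl⟩)) (.patom ..) fun _ => .inl ⟨_, rfl⟩)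
  | horn p ps k q c =>
    refine .all0 ⟨_, _, _, rfl⟩ ?_
    induction ps with
    | nil =>
      exact .all1 (.inr (.inl ⟨_, rfl⟩)) (.imp (.patom ..) (c.guarded_toF cd))
        fun _ => .inl ⟨_, rfl⟩
    | cons _ _ ih => exact .imp (.patom ..) ih
  | seed p ps =>
    refine .ex0 ⟨_, _, _, rfl⟩ ?_
    induction ps with
    | nil => exact .not (.fls _)
    | cons _ _ ih => exact .and (.patom ..) ih

theorem guarded_conj (rs : List (Rule P)) : Guarded (conj cd rs) := by
  induction rs with
  | nil => exact .not (.fls _)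
  | cons r _ ih => exact .and (r.guarded_toF cd) ih

theorem encode_conj (rs : List (Rule P)) :
    encode (conj cd rs) = (rs.map fun r => encode (r.toF cd)).foldr
      (fun m n => Nat.pair 5 (Nat.pair m n)) (encode (.not (.fls zero_le_two) : F 0)) := by
  induction rs with
  | nil => rfl
  | cons r rs ih => rw [List.map_cons, List.foldr_cons, ← ih]; rfl

/-- Primitive recursiveness of a sequence of rule lists, through the Gödel numbers of the sentences
that express the rules. -/
def PrimrecRules (rs : ℕ → List (Rule P)) : Prop :=
  Primrec fun t => (rs t).map fun r => encode (r.toF cd)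

variable {cd}

theorem PrimrecRules.encode_conj {rs : ℕ → List (Rule P)} (h : PrimrecRules cd rs) :
    Primrec fun t => encode (conj cd (rs t)) := by
  have hpair : Primrec₂ fun (_ : ℕ) (mn : ℕ × ℕ) => Nat.pair 5 (Nat.pair mn.1 mn.2) :=
    Primrec₂.natPair.comp (.const 5)
      (Primrec₂.natPair.comp (Primrec.fst.comp .snd) (Primrec.snd.comp .snd))
  exact (Primrec.list_foldr h (.const _) hpair).of_eq fun t =>
    (FlutedTwoTransEq.encode_conj cd (rs t)).symm

theorem PrimrecRules.const (rs : List (Rule P)) : PrimrecRules cd fun _ => rs := Primrec.const _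

theorem PrimrecRules.append {rs rs' : ℕ → List (Rule P)} (h : PrimrecRules cd rs)
    (h' : PrimrecRules cd rs') : PrimrecRules cd fun t => rs t ++ rs' t := by
  simp only [PrimrecRules, List.map_append]
  exact Primrec.list_append.comp h h'

theorem PrimrecRules.flatMap_range {rs : ℕ → List (Rule P)} (h : PrimrecRules cd rs) :
    PrimrecRules cd fun t => (List.range t).flatMap rs := by
  simp only [PrimrecRules, List.map_flatMap]
  exact Primrec.list_flatMap Primrec.list_range (h.comp Primrec.snd).to₂

theorem PrimrecRules.map {ι : Type} (is : List ι) {r : ℕ → ι → Rule P}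
    (h : ∀ i, Primrec fun t => encode ((r t i).toF cd)) :
    PrimrecRules cd fun t => is.map (r t) := by
  induction is with
  | nil => exact Primrec.const _
  | cons i is ih => exact Primrec.list_cons.comp (h i) ih

theorem primrec_encode_horn {p' : ℕ → P} {c : ℕ → Conclusion P} (p q : P) (k : Fin 2)
    (hp' : Primrec fun t => cd (p' t)) (hc : Primrec fun t => encode ((c t).toF cd)) :
    Primrec fun t => encode ((Rule.horn p [p' t] k q (c t)).toF cd) := by
  have pair {f : ℕ → ℕ} (m : ℕ) (hf : Primrec f) : Primrec fun t => Nat.pair m (f t) :=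
    Primrec₂.natPair.comp (.const m) hf
  have consequent := pair 9 <| pair 7 <| pair (encode (F.batom k)) <| pair 7 <|
    pair (encode (.patom (cd q) one_le_two le_rfl : F 2)) hc
  exact pair 9 <| pair 7 <| pair (encode (.patom (cd p) le_rfl one_le_two : F 1)) <|
    pair 7 <| Primrec₂.natPair.comp (pair 0 hp') consequent

theorem primrec_encode_pred {p : ℕ → P} (hp : Primrec fun t => cd (p t)) :
    Primrec fun t => encode ((Conclusion.pred (p t)).toF cd) :=
  Primrec₂.natPair.comp (.const 0) hp

end Formula

/-! ### The sentence of an input -/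

section Sentence

/-- The code of a machine that sets register `0` to `h` and then runs `B`; its labels `inl t` with
`t ≤ h` count up to `h`. -/
def Block.loadCode (B : Block (Fin 2)) (h : ℕ) : ℕ ⊕ B.L → Instr (Fin 2) (ℕ ⊕ B.L)
  | .inl t => if t < h then .inc 0 (.inl (t + 1)) else if t = h then .jump (.inr B.start) else .halt
  | .inr l => (B.code l).map .inr

theorem Block.reaches_loadCode (B : Block (Fin 2)) (h : ℕ) {c : B.L × (Fin 2 → ℕ)}
    (hc : Reaches B.code (B.start, ![h, 0]) c) :
    Reaches (B.loadCode h) (.inl 0, 0) (.inr c.1, c.2) := by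
  have load : ∀ t ≤ h, Reaches (B.loadCode h) (.inl 0, 0) (.inl t, ![t, 0]) := by
    intro t
    induction t with
    | zero =>
      have vec₂_zero : (![0, 0] : Fin 2 → ℕ) = 0 := by ext i; fin_cases i <;> rfl
      simpa only [vec₂_zero] using fun _ => .refl
    | succ t ih =>
      intro ht
      simpa [update_vec₂_zero] using (ih (by omega)).tail (.inc (if_pos (by omega)))
  refine ((load h le_rfl).tail (.jump (by simp [loadCode]; rfl))).trans ?_
  exact hc.map Sum.inr fun l => .inr rfl

theorem Block.haltsFrom_loadCode (B : Block (Fin 2)) (h : ℕ)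
    (hB : HaltsFrom B.code (B.start, ![h, 0])) : HaltsFrom (B.loadCode h) (.inl 0, 0) :=
  let ⟨_, hc, hc'⟩ := hB
  ⟨_, B.reaches_loadCode h hc, by simp [loadCode, hc']⟩

theorem Block.rejectsFrom_loadCode (B : Block (Fin 2)) (h : ℕ)
    (hB : RejectsFrom B.code (B.start, ![h, 0])) : RejectsFrom (B.loadCode h) (.inl 0, 0) :=
  let ⟨_, hc, hc'⟩ := hB
  ⟨_, B.reaches_loadCode h hc, by simp [loadCode, hc']⟩

theorem exists_injective_comp_eq_two_mul {α : Type*} [Countable α] {g : ℕ → α} (hg : Injective g) :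
    ∃ f : α → ℕ, Injective f ∧ ∀ t, f (g t) = 2 * t := by
  obtain ⟨e, he⟩ := exists_injective_nat α
  refine ⟨extend g (2 * ·) (2 * e · + 1), fun a b hab => ?_, hg.extend_apply _ _⟩
  by_cases ha : ∃ t, g t = a <;> by_cases hb : ∃ t, g t = b
  · obtain ⟨⟨t, rfl⟩, ⟨t', rfl⟩⟩ := And.intro ha hb
    grind [hg.extend_apply]
  · obtain ⟨t, rfl⟩ := ha
    rw [hg.extend_apply, extend_apply' _ _ _ hb] at hab
    omega
  · obtain ⟨t, rfl⟩ := hb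
    rw [hg.extend_apply, extend_apply' _ _ _ ha] at hab
    omega
  · rw [extend_apply' _ _ _ ha, extend_apply' _ _ _ hb] at hab
    exact he (by omega)

/-- The rules for a run of `B` on input `h` in register `0`. -/
noncomputable def Block.inputRules (B : Block (Fin 2)) (h : ℕ) : List (Rule (Symbol (ℕ ⊕ B.L))) :=
  have := Fintype.ofFinite B.L
  geometryRules ++ counterRules ++ startRules (.inl 0) ++
  (Finset.univ.toList.flatMap fun l => instrRules (.inr l) ((B.code l).map .inr)) ++
  ((List.range h).flatMap fun t => instrRules (.inl t) (.inc 0 (.inl (t + 1)))) ++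
  instrRules (.inl h) (.jump (.inr B.start))

theorem Block.forall_mem_inputRules_holds (B : Block (Fin 2)) (h : ℕ) {A : Type}
    {U : Symbol (ℕ ⊕ B.L) → A → Prop} {T : Fin 2 → A → A → Prop} :
    (∀ r ∈ B.inputRules h, r.Holds U T) ↔ Simulates (B.loadCode h) (.inl 0) U T := by
  simp only [inputRules, List.forall_mem_append, List.forall_mem_flatMap, Finset.mem_toList,
    Finset.mem_univ, forall_const, List.mem_range]
  constructor
  · rintro ⟨⟨⟨⟨⟨hg, hc⟩, hs⟩, hB⟩, hload⟩, hjump⟩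
    refine ⟨hg, hc, hs, Sum.forall.2 ⟨fun t => ?_, hB⟩⟩
    obtain ht | rfl | ht := lt_trichotomy t h
    · simpa only [loadCode, if_pos ht] using hload t ht
    · simpa only [loadCode, lt_irrefl, if_true, if_false] using hjump
    · simp [loadCode, ht.not_gt, ht.ne', instrRules]
  · rintro ⟨hg, hc, hs, hi⟩
    refine ⟨⟨⟨⟨⟨hg, hc⟩, hs⟩, fun l => hi (.inr l)⟩, fun t ht => ?_⟩, ?_⟩
    · simpa only [loadCode, if_pos ht] using hi (.inl t)
    · simpa only [loadCode, lt_irrefl, if_true, if_false] using hi (.inl h)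

variable {Λ : Type} {cd : Symbol Λ → ℕ}

theorem PrimrecRules.nodeRules {p : ℕ → Symbol Λ} {c : ℕ → Conclusion (Symbol Λ)}
    (hp : Primrec fun t => cd (p t)) (hc : Primrec fun t => encode ((c t).toF cd)) :
    PrimrecRules cd fun t => nodeRules [p t] (c t) :=
  .map _ fun _ => primrec_encode_horn _ _ _ hp hc

theorem PrimrecRules.carryRules {p q : ℕ → Symbol Λ} (hp : Primrec fun t => cd (p t)) (d : Port)
    (hq : Primrec fun t => cd (q t)) : PrimrecRules cd fun t => carryRules [p t] d (q t) :=
  .append (.nodeRules hq (primrec_encode_pred hq))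
    (.map _ fun _ => primrec_encode_horn _ _ _ hp (primrec_encode_pred hq))

theorem Block.primrecRules_inputRules (B : Block (Fin 2)) {cd : Symbol (ℕ ⊕ B.L) → ℕ}
    (hcd : Primrec fun t => cd (.label (.inl t))) : PrimrecRules cd B.inputRules :=
  .append (.append (.const _) <| .flatMap_range <|
    .append (.carryRules hcd _ (hcd.comp .succ)) (.carryRules hcd _ (.const _)))
    (.nodeRules hcd (.const _))

theorem Block.finitelySatisfiableTransEquiv_conj (B : Block (Fin 2)) {cd : Symbol (ℕ ⊕ B.L) → ℕ}
    (hcd : Injective cd) {h : ℕ} (hB : HaltsFrom B.code (B.start, ![h, 0])) :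
    FinitelySatisfiableTransEquiv (conj cd (B.inputRules h)) := by
  obtain ⟨A, hne, hfin, U, T, hT₀, hT₁, hs⟩ := (B.haltsFrom_loadCode h hB).exists_simulates
  have decode : (fun p a => ∃ p', cd p' = cd p ∧ U p' a) = U := by
    simp [hcd.eq_iff]
  refine ⟨A, hne, hfin, ⟨fun n a => ∃ p, cd p = n ∧ U p a, T⟩, fun _ _ _ => hT₀.trans _ _ _, hT₁,
    (sat_conj ..).2 ?_⟩
  rw [decode]
  exact (B.forall_mem_inputRules_holds h).2 hs

theorem Block.not_satisfiable_conj (B : Block (Fin 2)) (cd : Symbol (ℕ ⊕ B.L) → ℕ) {h : ℕ}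
    (hB : RejectsFrom B.code (B.start, ![h, 0])) : ¬ Satisfiable (conj cd (B.inputRules h)) := by
  rintro ⟨A, -, M, hT, hM⟩
  have (k : Fin 2) : IsTrans A (M.T k) := ⟨hT k⟩
  exact ((B.forall_mem_inputRules_holds h).1 ((sat_conj ..).1 hM)).not_rejectsFrom
    (B.rejectsFrom_loadCode h hB)

end Sentence

/-! ### Undecidability -/

theorem primrec_two_pow : Primrec fun n : ℕ => 2 ^ n := by
  have hdouble : Primrec₂ fun _ e : ℕ => e * 2 := Primrec.nat_mul.comp Primrec.snd (.const 2)
  refine (Primrec.nat_rec₁ 1 hdouble).of_eq fun n => ?_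
  induction n with
  | zero => rfl
  | succ n ih => rw [pow_succ, ← ih]

theorem exists_guarded_family_of_partrec {u : ℕ →. ℕ} (hu : Partrec u) :
    ∃ φ : ℕ → F 0, (∀ n, Guarded (φ n)) ∧ (Primrec fun n => encode (φ n)) ∧
      (∀ n, 0 ∈ u n → FinitelySatisfiableTransEquiv (φ n)) ∧
      ∀ n, 1 ∈ u n → ¬ Satisfiable (φ n) := by
  obtain ⟨B, hB⟩ := exists_block_of_partrec hu
  have := B.finite
  have label_inj : Injective fun t => (.label (.inl t) : Symbol (ℕ ⊕ B.L)) :=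
    fun t t' h => Sum.inl.inj (Symbol.label.inj h)
  obtain ⟨cd, hcd, hlabel⟩ := exists_injective_comp_eq_two_mul label_inj
  have hprim : Primrec fun t => cd (.label (.inl t)) :=
    (Primrec.nat_mul.comp (.const 2) .id).of_eq fun t => (hlabel t).symm
  exact ⟨fun n => conj cd (B.inputRules (2 ^ n)), fun _ => guarded_conj _ _,
    (B.primrecRules_inputRules hprim).encode_conj.comp primrec_two_pow,
    fun n h => B.finitelySatisfiableTransEquiv_conj hcd ((hB n).1 h),
    fun n h => B.not_satisfiable_conj cd ((hB n).2 h)⟩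

section Satisfiability

variable {φ : F 0}

theorem FinitelySatisfiable.satisfiable : FinitelySatisfiable φ → Satisfiable φ :=
  fun ⟨A, hne, _, M, h⟩ => ⟨A, hne, M, h⟩

theorem FinitelySatisfiableTransEquiv.satisfiableTransEquiv :
    FinitelySatisfiableTransEquiv φ → SatisfiableTransEquiv φ :=
  fun ⟨A, hne, _, M, h⟩ => ⟨A, hne, M, h⟩

theorem SatisfiableTransEquiv.satisfiable : SatisfiableTransEquiv φ → Satisfiable φ :=
  fun ⟨A, hne, M, h₀, h₁, h⟩ => ⟨A, hne, M, Fin.forall_fin_two.2 ⟨h₀, fun _ _ _ => h₁.trans⟩, h⟩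

theorem FinitelySatisfiableTransEquiv.finitelySatisfiable :
    FinitelySatisfiableTransEquiv φ → FinitelySatisfiable φ :=
  fun ⟨A, hne, hfin, M, h₀, h₁, h⟩ =>
    ⟨A, hne, hfin, M, Fin.forall_fin_two.2 ⟨h₀, fun _ _ _ => h₁.trans⟩, h⟩

end Satisfiability

theorem guarded_fluted_eq_undecidable_general :
    ¬ ∃ f : ℕ → Bool, Computable f ∧ ∀ φ : F 0, Guarded φ →
      (FinitelySatisfiableTransEquiv φ → f (encode φ) = true) ∧
      (f (encode φ) = true → Satisfiable φ) := by
  rintro ⟨f, hf, hfφ⟩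
  obtain ⟨φ, hφ, hprim, hsat, hunsat⟩ := exists_guarded_family_of_partrec
    (Nat.Partrec.Code.eval_part.comp (Computable.ofNat Nat.Partrec.Code) Computable.id)
  have hflip : Computable fun n => bif f (encode (φ n)) then 1 else 0 :=
    .cond (hf.comp hprim.to_comp) (.const 1) (.const 0)
  obtain ⟨e, he⟩ := Nat.Partrec.Code.exists_code.1 (Partrec.nat_iff.1 hflip.partrec)
  have he' : (bif f (encode (φ (Encodable.encode e))) then 1 else 0) ∈
      (Denumerable.ofNat Nat.Partrec.Code (Encodable.encode e)).eval (Encodable.encode e) := by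
    simp [he]
  obtain ⟨htrue, hfalse⟩ := hfφ _ (hφ (Encodable.encode e))
  cases hb : f (encode (φ (Encodable.encode e))) <;> rw [hb] at he'
  · exact Bool.false_ne_true (hb.symm.trans (htrue (hsat _ he')))
  · exact hunsat _ he' (hfalse hb)

/-- Corollary of Theorem 8.  The satisfiability and the finite
satisfiability problems for the intersection of the fluted fragment with equality and
the two-variable guarded fragment are undecidable in the presence of two distinguished
transitive relations, and also in the presence of one distinguished transitive and one
distinguished equivalence relation. -/
theorem guarded_fluted_eq_undecidable :
    (¬ ∃ f : ℕ → Bool, Computable f ∧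
      ∀ φ : F 0, Guarded φ → (f (encode φ) = true ↔ Satisfiable φ)) ∧
    (¬ ∃ f : ℕ → Bool, Computable f ∧
      ∀ φ : F 0, Guarded φ → (f (encode φ) = true ↔ FinitelySatisfiable φ)) ∧
    (¬ ∃ f : ℕ → Bool, Computable f ∧
      ∀ φ : F 0, Guarded φ → (f (encode φ) = true ↔ SatisfiableTransEquiv φ)) ∧
    (¬ ∃ f : ℕ → Bool, Computable f ∧
      ∀ φ : F 0, Guarded φ → (f (encode φ) = true ↔ FinitelySatisfiableTransEquiv φ)) := by
  refine ⟨?_, ?_, ?_, ?_⟩ <;> rintro ⟨f, hf, h⟩ <;>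
    refine guarded_fluted_eq_undecidable_general ⟨f, hf, fun φ hφ => ?_⟩ <;> rw [h φ hφ]
  · exact ⟨fun h => h.finitelySatisfiable.satisfiable, id⟩
  · exact ⟨fun h => h.finitelySatisfiable, fun h => h.satisfiable⟩
  · exact ⟨fun h => h.satisfiableTransEquiv, fun h => h.satisfiable⟩
  · exact ⟨id, fun h => h.finitelySatisfiable.satisfiable⟩

end FlutedTwoTransEq
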